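/- arXiv:math/0306434 — 7 statements merged into one kernel-verified Lean document; each statement's English description precedes it below -/
import Mathlib

section
/- Let ν be a partition with l = l(ν) parts. For every nonzero complex number q, ∏_{(i,j) a cell of ν} (q^{−h(i,j)} − q^{h(i,j)}) · ∏_{1≤a<b≤l} (q^{−(ν_a − ν_b − a + b)} − q^{ν_a − ν_b − a + b}) = ∏_{1≤a<b≤l} (q^{−(b−a)} − q^{b−a}) · ∏_{i=1}^{l} ∏_{j=1}^{ν_i} (q^{−(j − i + l)} − q^{j − i + l}). -/
open Finset

theorem row_left (l : ℕ) (ν : ℕ → ℕ)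
    (hanti : ∀ a b : ℕ, 1 ≤ a → a ≤ b → b ≤ l → ν b ≤ ν a)
    (ν' : ℕ → ℕ)
    (hν' : ∀ j : ℕ, ν' j = ((Finset.Icc 1 l).filter fun i => j ≤ ν i).card)
    (f : ℤ → ℂ) (i : ℕ) (hi : 1 ≤ i) (hil : i ≤ l) :
    (∏ j ∈ Finset.Icc 1 (ν i), f ((ν i : ℤ) + (ν' j : ℤ) - (i : ℤ) - (j : ℤ) + 1)) *
      (∏ b ∈ Finset.Icc (i + 1) l, f ((ν i : ℤ) - (ν b : ℤ) - (i : ℤ) + (b : ℤ)))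
    = ∏ k ∈ Finset.Icc (1 : ℤ) ((ν i : ℤ) + l - i), f k := by
  have hle : ∀ j, ν' j ≤ l := by
    intro j
    rw [hν']
    exact (Finset.card_filter_le _ _).trans (by simp)
  have hmono : ∀ j j', j ≤ j' → ν' j' ≤ ν' j := by
    intro j j' h
    rw [hν', hν']
    apply Finset.card_le_card
    intro x hx
    simp only [Finset.mem_filter] at hx ⊢
    exact ⟨hx.1, h.trans hx.2⟩
  have h1 : ∀ j b, 1 ≤ b → b ≤ l → j ≤ ν b → b ≤ ν' j := by
    intro j b hb hbl hj
    rw [hν']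
    have : Finset.Icc 1 b ⊆ (Finset.Icc 1 l).filter fun i => j ≤ ν i := by
      intro x hx
      simp only [Finset.mem_filter, Finset.mem_Icc] at hx ⊢
      exact ⟨⟨hx.1, hx.2.trans hbl⟩, hj.trans (hanti x b hx.1 hx.2 hbl)⟩
    simpa using Finset.card_le_card this
  have h2 : ∀ j b, 1 ≤ b → b ≤ l → ν b < j → ν' j < b := by
    intro j b hb hbl hj
    rw [hν']
    have : ((Finset.Icc 1 l).filter fun i => j ≤ ν i) ⊆ Finset.Icc 1 (b - 1) := by
      intro x hx
      simp only [Finset.mem_filter, Finset.mem_Icc] at hx ⊢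
      refine ⟨hx.1.1, ?_⟩
      by_contra hc
      have := hanti b x hb (by omega) hx.1.2
      omega
    have := Finset.card_le_card this
    simp only [Nat.card_Icc] at this
    omega
  let g1 : ℕ → ℤ := fun j => (ν i : ℤ) + (ν' j : ℤ) - (i : ℤ) - (j : ℤ) + 1
  let g2 : ℕ → ℤ := fun b => (ν i : ℤ) - (ν b : ℤ) - (i : ℤ) + (b : ℤ)
  have i1 : Set.InjOn g1 (Finset.Icc 1 (ν i) : Finset ℕ) := by
    intro x _ y _ hxy
    simp only [g1] at hxy
    rcases lt_trichotomy x y with h | h | h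
    · have := hmono x y h.le
      omega
    · exact h
    · have := hmono y x h.le
      omega
  have i2 : Set.InjOn g2 (Finset.Icc (i + 1) l : Finset ℕ) := by
    intro x hx y hy hxy
    simp only [Finset.coe_Icc, Set.mem_Icc] at hx hy
    simp only [g2] at hxy
    rcases lt_trichotomy x y with h | h | h
    · have := hanti x y (by omega) h.le hy.2
      omega
    · exact h
    · have := hanti y x (by omega) h.le hx.2
      omega
  have hd : Disjoint ((Finset.Icc 1 (ν i)).image g1) ((Finset.Icc (i + 1) l).image g2) := by
    rw [Finset.disjoint_left]
    intro x hx hx'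
    simp only [Finset.mem_image, Finset.mem_Icc] at hx hx'
    obtain ⟨j, hj, rfl⟩ := hx
    obtain ⟨b, hb, hbe⟩ := hx'
    simp only [g1, g2] at hbe
    rcases le_or_gt j (ν b) with h | h
    · have := h1 j b (by omega) hb.2 h
      omega
    · have := h2 j b (by omega) hb.2 h
      omega
  have hu : ((Finset.Icc 1 (ν i)).image g1) ∪ ((Finset.Icc (i + 1) l).image g2)
      = Finset.Icc (1 : ℤ) ((ν i : ℤ) + l - i) := by
    apply Finset.eq_of_subset_of_card_le
    · intro x hx
      simp only [Finset.mem_union, Finset.mem_image, Finset.mem_Icc] at hx ⊢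
      rcases hx with ⟨j, hj, rfl⟩ | ⟨b, hb, rfl⟩
      · have := h1 j i hi hil hj.2
        have := hle j
        simp only [g1]
        omega
      · have := hanti i b hi (by omega) hb.2
        simp only [g2]
        omega
    · rw [Finset.card_union_of_disjoint hd, Finset.card_image_of_injOn i1,
        Finset.card_image_of_injOn i2]
      simp only [Int.card_Icc, Nat.card_Icc]
      omega
  rw [← hu, Finset.prod_union hd, Finset.prod_image i1, Finset.prod_image i2]

theorem row_right (l n : ℕ) (f : ℤ → ℂ) (i : ℕ) (hil : i ≤ l) :
    (∏ b ∈ Finset.Icc (i + 1) l, f ((b : ℤ) - (i : ℤ))) *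
      (∏ j ∈ Finset.Icc 1 n, f ((j : ℤ) - (i : ℤ) + (l : ℤ)))
    = ∏ k ∈ Finset.Icc (1 : ℤ) ((n : ℤ) + l - i), f k := by
  let g1 : ℕ → ℤ := fun b => (b : ℤ) - (i : ℤ)
  let g2 : ℕ → ℤ := fun j => (j : ℤ) - (i : ℤ) + (l : ℤ)
  have i1 : Set.InjOn g1 (Finset.Icc (i + 1) l : Finset ℕ) := by
    intro x _ y _ hxy
    simp only [g1] at hxy
    omega
  have i2 : Set.InjOn g2 (Finset.Icc 1 n : Finset ℕ) := by
    intro x _ y _ hxy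
    simp only [g2] at hxy
    omega
  have hd : Disjoint ((Finset.Icc (i + 1) l).image g1) ((Finset.Icc 1 n).image g2) := by
    rw [Finset.disjoint_left]
    intro x hx hx'
    simp only [Finset.mem_image, Finset.mem_Icc] at hx hx'
    obtain ⟨j, hj, rfl⟩ := hx
    obtain ⟨b, hb, hbe⟩ := hx'
    simp only [g1, g2] at hbe
    omega
  have hu : ((Finset.Icc (i + 1) l).image g1) ∪ ((Finset.Icc 1 n).image g2)
      = Finset.Icc (1 : ℤ) ((n : ℤ) + l - i) := by
    apply Finset.eq_of_subset_of_card_le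
    · intro x hx
      simp only [Finset.mem_union, Finset.mem_image, Finset.mem_Icc] at hx ⊢
      rcases hx with ⟨j, hj, rfl⟩ | ⟨b, hb, rfl⟩
      · simp only [g1]
        omega
      · simp only [g2]
        omega
    · rw [Finset.card_union_of_disjoint hd, Finset.card_image_of_injOn i1,
        Finset.card_image_of_injOn i2]
      simp only [Int.card_Icc, Nat.card_Icc]
      omega
  rw [← hu, Finset.prod_union hd, Finset.prod_image i1, Finset.prod_image i2]

/-- for a partition `ν` with `l` parts (indexed `1,…,l`), conjugate `ν'`,
hook lengths `h(i,j) = ν i + ν' j − i − j + 1`, and any nonzero complex `q`: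
`∏_{cells} (q^{−h} − q^{h}) · ∏_{a<b} (q^{−(ν_a−ν_b−a+b)} − q^{ν_a−ν_b−a+b})
 = ∏_{a<b} (q^{−(b−a)} − q^{b−a}) · ∏_i ∏_j (q^{−(j−i+l)} − q^{j−i+l})`. -/
theorem marino_vafa_q_identity
    (l : ℕ) (ν : ℕ → ℕ)
    (hanti : ∀ a b : ℕ, 1 ≤ a → a ≤ b → b ≤ l → ν b ≤ ν a)
    (hpos : ∀ i : ℕ, 1 ≤ i → i ≤ l → 0 < ν i)
    (ν' : ℕ → ℕ)
    (hν' : ∀ j : ℕ, ν' j = ((Finset.Icc 1 l).filter fun i => j ≤ ν i).card)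
    (q : ℂ) (hq : q ≠ 0) :
    (∏ i ∈ Finset.Icc 1 l, ∏ j ∈ Finset.Icc 1 (ν i),
        (q ^ (-((ν i : ℤ) + (ν' j : ℤ) - (i : ℤ) - (j : ℤ) + 1))
          - q ^ ((ν i : ℤ) + (ν' j : ℤ) - (i : ℤ) - (j : ℤ) + 1))) *
      (∏ a ∈ Finset.Icc 1 l, ∏ b ∈ Finset.Icc (a + 1) l,
        (q ^ (-((ν a : ℤ) - (ν b : ℤ) - (a : ℤ) + (b : ℤ)))
          - q ^ ((ν a : ℤ) - (ν b : ℤ) - (a : ℤ) + (b : ℤ))))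
    = (∏ a ∈ Finset.Icc 1 l, ∏ b ∈ Finset.Icc (a + 1) l,
        (q ^ (-((b : ℤ) - (a : ℤ))) - q ^ ((b : ℤ) - (a : ℤ)))) *
      (∏ i ∈ Finset.Icc 1 l, ∏ j ∈ Finset.Icc 1 (ν i),
        (q ^ (-((j : ℤ) - (i : ℤ) + (l : ℤ))) - q ^ ((j : ℤ) - (i : ℤ) + (l : ℤ)))) := by
  rw [← Finset.prod_mul_distrib, ← Finset.prod_mul_distrib]
  apply Finset.prod_congr rfl
  intro i hi
  rw [Finset.mem_Icc] at hi
  exact (row_left l ν hanti ν' hν' (fun k => q ^ (-k) - q ^ k) i hi.1 hi.2).trans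
    (row_right l (ν i) (fun k => q ^ (-k) - q ^ k) i hi.2).symm
end

section
/- Let ν be a partition with l = l(ν) parts. In the polynomial ring ℤ[t], ∏_{(i,j) a cell of ν} (1 − t^{h(i,j)}) · ∏_{1≤a<b≤l} (1 − t^{ν_a − ν_b − a + b}) = ∏_{1≤a<b≤l} (1 − t^{b−a}) · ∏_{i=1}^{l} ∏_{j=1}^{ν_i} (1 − t^{j − i + l}). (All exponents appearing are positive integers.) -/
open Finset Polynomial

theorem conj_key (l : ℕ) (ν : ℕ → ℕ)
    (hanti : ∀ a b : ℕ, 1 ≤ a → a ≤ b → b ≤ l → ν b ≤ ν a)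
    (ν' : ℕ → ℕ)
    (hν' : ∀ j : ℕ, ν' j = ((Finset.Icc 1 l).filter fun i => j ≤ ν i).card)
    (b j : ℕ) (hb : 1 ≤ b) (hbl : b ≤ l) : (j ≤ ν b → b ≤ ν' j) ∧ (ν b < j → ν' j < b) := by
  constructor
  · intro h
    have hs : Finset.Icc 1 b ⊆ (Finset.Icc 1 l).filter fun i => j ≤ ν i := by
      intro x hx
      simp only [Finset.mem_Icc, Finset.mem_filter] at hx ⊢
      have := hanti x b hx.1 hx.2 hbl
      omega
    have := Finset.card_le_card hs
    rw [← hν', Nat.card_Icc] at this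
    omega
  · intro h
    have hs : ((Finset.Icc 1 l).filter fun i => j ≤ ν i) ⊆ Finset.Icc 1 (b - 1) := by
      intro x hx
      simp only [Finset.mem_Icc, Finset.mem_filter] at hx ⊢
      by_contra hc
      have := hanti b x hb (by omega) hx.1.2
      omega
    have := Finset.card_le_card hs
    rw [← hν', Nat.card_Icc] at this
    omega

theorem row_lemma {M : Type*} [CommMonoid M] (f : ℕ → M) (l : ℕ) (ν : ℕ → ℕ)
    (hanti : ∀ a b : ℕ, 1 ≤ a → a ≤ b → b ≤ l → ν b ≤ ν a)
    (ν' : ℕ → ℕ)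
    (hν' : ∀ j : ℕ, ν' j = ((Finset.Icc 1 l).filter fun i => j ≤ ν i).card)
    (i : ℕ) (hi : 1 ≤ i) (hil : i ≤ l) :
    (∏ j ∈ Finset.Icc 1 (ν i), f (ν i + ν' j + 1 - i - j)) *
      (∏ b ∈ Finset.Icc (i + 1) l, f (ν i - ν b + (b - i)))
    = ∏ k ∈ Finset.Icc 1 (ν i + l - i), f k := by
  have key := conj_key l ν hanti ν' hν'
  have hle : ∀ j, ν' j ≤ l := by
    intro j
    rw [hν']
    exact (Finset.card_filter_le _ _).trans (by simp)
  have hmono : ∀ j k, j ≤ k → ν' k ≤ ν' j := by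
    intro j k hjk
    rw [hν', hν']
    apply Finset.card_le_card
    intro x hx
    simp only [Finset.mem_filter] at hx ⊢
    exact ⟨hx.1, hjk.trans hx.2⟩
  have inj1 : Set.InjOn (fun j => ν i + ν' j + 1 - i - j) (Finset.Icc 1 (ν i) : Finset ℕ) := by
    intro x hx y hy hxy
    simp only [Finset.coe_Icc, Set.mem_Icc] at hx hy hxy
    have h1 := (key i x hi hil).1 hx.2
    have h2 := (key i y hi hil).1 hy.2
    rcases le_total x y with h | h <;> have := hmono _ _ h <;> omega
  have inj2 : Set.InjOn (fun b => ν i - ν b + (b - i)) (Finset.Icc (i + 1) l : Finset ℕ) := by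
    intro x hx y hy hxy
    simp only [Finset.coe_Icc, Set.mem_Icc] at hx hy hxy
    have h1 := hanti i x hi (by omega) hx.2
    have h2 := hanti i y hi (by omega) hy.2
    rcases le_total x y with h | h
    · have := hanti x y (by omega) h hy.2
      omega
    · have := hanti y x (by omega) h hx.2
      omega
  have hdisj : Disjoint ((Finset.Icc 1 (ν i)).image (fun j => ν i + ν' j + 1 - i - j))
      ((Finset.Icc (i + 1) l).image (fun b => ν i - ν b + (b - i))) := by
    rw [Finset.disjoint_left]
    intro k h1 h2
    simp only [Finset.mem_image, Finset.mem_Icc] at h1 h2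
    obtain ⟨j, hj, rfl⟩ := h1
    obtain ⟨b, hb, hk⟩ := h2
    have h1 := (key i j hi hil).1 hj.2
    have h2 := hanti i b hi (by omega) hb.2
    have h3 := key b j (by omega) hb.2
    rcases le_or_gt j (ν b) with h | h
    · have := h3.1 h
      omega
    · have := h3.2 h
      omega
  have hunion : ((Finset.Icc 1 (ν i)).image (fun j => ν i + ν' j + 1 - i - j)) ∪
      ((Finset.Icc (i + 1) l).image (fun b => ν i - ν b + (b - i)))
      = Finset.Icc 1 (ν i + l - i) := by
    apply Finset.eq_of_subset_of_card_le
    · intro k hk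
      simp only [Finset.mem_union, Finset.mem_image, Finset.mem_Icc] at hk ⊢
      rcases hk with ⟨j, hj, rfl⟩ | ⟨b, hb, rfl⟩
      · have h1 := (key i j hi hil).1 hj.2
        have := hle j
        omega
      · omega
    · rw [Finset.card_union_of_disjoint hdisj, Finset.card_image_of_injOn inj1,
        Finset.card_image_of_injOn inj2]
      simp only [Nat.card_Icc]
      omega
  rw [← hunion, Finset.prod_union hdisj, Finset.prod_image inj1, Finset.prod_image inj2]

theorem row_lemma_right {M : Type*} [CommMonoid M] (f : ℕ → M) (l n i : ℕ) (hil : i ≤ l) :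
    (∏ b ∈ Finset.Icc (i + 1) l, f (b - i)) * (∏ j ∈ Finset.Icc 1 n, f (j + l - i))
    = ∏ k ∈ Finset.Icc 1 (n + l - i), f k := by
  induction n with
  | zero =>
    simp only [Finset.Icc_eq_empty_of_lt Nat.zero_lt_one, Finset.prod_empty, mul_one]
    refine Finset.prod_bij' (fun b _ => b - i) (fun k _ => k + i) ?_ ?_ ?_ ?_ ?_
    · intro b hb
      simp only [Finset.mem_Icc] at hb ⊢
      omega
    · intro b hb
      simp only [Finset.mem_Icc] at hb ⊢
      omega
    · intro b hb
      simp only [Finset.mem_Icc] at hb ⊢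
      omega
    · intro b hb
      simp only [Finset.mem_Icc] at hb ⊢
      omega
    · intro b hb
      rfl
  | succ n ih =>
    rw [Finset.prod_Icc_succ_top (by omega), ← mul_assoc, ih,
      show n + 1 + l - i = (n + l - i) + 1 by omega, Finset.prod_Icc_succ_top (by omega)]

/-- the hook length identity in `ℤ[t]`: for a partition `ν` with `l` parts
(indexed `1,…,l`), conjugate `ν'`, hook lengths `h(i,j) = ν i + ν' j + 1 − i − j`,
`∏_{cells} (1 − t^{h(i,j)}) · ∏_{a<b} (1 − t^{ν_a − ν_b − a + b})
 = ∏_{a<b} (1 − t^{b−a}) · ∏_{i=1}^{l} ∏_{j=1}^{ν_i} (1 − t^{j − i + l})`. -/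
theorem hook_length_polynomial_identity
    (l : ℕ) (ν : ℕ → ℕ)
    (hanti : ∀ a b : ℕ, 1 ≤ a → a ≤ b → b ≤ l → ν b ≤ ν a)
    (hpos : ∀ i : ℕ, 1 ≤ i → i ≤ l → 0 < ν i)
    (ν' : ℕ → ℕ)
    (hν' : ∀ j : ℕ, ν' j = ((Finset.Icc 1 l).filter fun i => j ≤ ν i).card) :
    (∏ i ∈ Finset.Icc 1 l, ∏ j ∈ Finset.Icc 1 (ν i),
        (1 - (X : Polynomial ℤ) ^ (ν i + ν' j + 1 - i - j))) *
      (∏ a ∈ Finset.Icc 1 l, ∏ b ∈ Finset.Icc (a + 1) l,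
        (1 - (X : Polynomial ℤ) ^ (ν a - ν b + (b - a))))
    = (∏ a ∈ Finset.Icc 1 l, ∏ b ∈ Finset.Icc (a + 1) l,
        (1 - (X : Polynomial ℤ) ^ (b - a))) *
      (∏ i ∈ Finset.Icc 1 l, ∏ j ∈ Finset.Icc 1 (ν i),
        (1 - (X : Polynomial ℤ) ^ (j + l - i))) := by
  rw [← Finset.prod_mul_distrib, ← Finset.prod_mul_distrib]
  refine Finset.prod_congr rfl fun i hi => ?_
  rw [Finset.mem_Icc] at hi
  rw [row_lemma (fun k => 1 - (X : Polynomial ℤ) ^ k) l ν hanti ν' hν' i hi.1 hi.2,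
    row_lemma_right (fun k => 1 - (X : Polynomial ℤ) ^ k) l (ν i) i hi.2]
end

section
/- Let h be a permutation of a finite set X and let s ≠ t be two points of X. Then the cycle type (including fixed points) of swap(s,t)∘h is obtained from the cycle type of h in exactly one of the following two ways: either (join) two parts i and j are removed and one part i+j is added, or (cut) one part k is removed and two parts a, b with a + b = k are added. -/
open Finset Equiv

/-- The cycle type of a permutation including fixed points: the multiset of the sizes of
all cycles (orbits), where each fixed point contributes a part equal to `1`. -/
def cycleTypeFull {X : Type*} [Fintype X] [DecidableEq X] (h : Equiv.Perm X) : Multiset ℕ :=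
  h.cycleType + Multiset.replicate (Finset.univ.filter fun x => h x = x).card 1

/-- The finset of orbits of a permutation. -/
def orbitsF {X : Type*} [Fintype X] [DecidableEq X] (h : Equiv.Perm X) : Finset (Finset X) :=
  open Classical in Finset.univ.image (fun x => Finset.univ.filter (fun y => h.SameCycle x y))

theorem swap_step {X : Type*} [DecidableEq X] (r : X → X → Prop) (hr : Equivalence r)
    (s t : X) (hst : r s t) (z : X) : r z (Equiv.swap s t z) := by
  rw [Equiv.swap_apply_def]
  split_ifs with h1 h2
  · subst h1; exact hst
  · subst h2; exact hr.symm hst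
  · exact hr.refl _

theorem sameCycle_le {X : Type*} [Finite X] (h : Equiv.Perm X) (r : X → X → Prop)
    (hr : Equivalence r) (hs : ∀ x, r x (h x)) {x y : X} (hxy : h.SameCycle x y) : r x y := by
  obtain ⟨n, rfl⟩ := hxy.exists_nat_pow_eq
  clear hxy
  induction n with
  | zero => exact hr.refl _
  | succ n ih =>
    rw [pow_succ']
    exact hr.trans ih (hs _)

theorem sameCycle_equivalence {X : Type*} (h : Equiv.Perm X) : Equivalence h.SameCycle :=
  ⟨fun _ => Equiv.Perm.SameCycle.refl _ _, fun h => h.symm, fun h1 h2 => h1.trans h2⟩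

theorem join_same {X : Type*} [Finite X] [DecidableEq X] (h : Equiv.Perm X) (s t : X)
    (hn : ¬ h.SameCycle s t) : (Equiv.swap s t * h).SameCycle t s := by
  by_contra hc
  have key : ∀ n : ℕ, (Equiv.swap s t * h).SameCycle t ((h ^ n) t) := by
    intro n
    induction n with
    | zero => exact Equiv.Perm.SameCycle.refl _ _
    | succ n ih =>
      by_cases h1 : (h ^ (n+1)) t = t
      · rw [h1]
      have h2 : (h ^ (n+1)) t ≠ s := by
        intro h2
        exact hn (Equiv.Perm.SameCycle.symm ⟨((n+1 : ℕ) : ℤ), by rw [zpow_natCast]; exact h2⟩)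
      refine ih.trans ⟨1, ?_⟩
      rw [pow_succ'] at h1 h2 ⊢
      simp only [Equiv.Perm.mul_apply, zpow_one] at h1 h2 ⊢
      exact Equiv.swap_apply_of_ne_of_ne h2 h1
  have h3 : h.SameCycle t (h⁻¹ t) := ⟨-1, by simp⟩
  obtain ⟨n, hn'⟩ := h3.exists_nat_pow_eq
  have := key n
  rw [hn'] at this
  apply hc
  refine this.trans ⟨1, ?_⟩
  simp

theorem cut_not_same {X : Type*} [Finite X] [DecidableEq X] (h : Equiv.Perm X) (s t : X)
    (hst : s ≠ t) (hn : h.SameCycle s t) : ¬ (Equiv.swap s t * h).SameCycle s t := by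
  classical
  have hex : ∃ n : ℕ, (h ^ n) s = t := hn.exists_nat_pow_eq
  have hm := Nat.find_spec hex
  have hmin : ∀ k < Nat.find hex, (h ^ k) s ≠ t := fun k hk => Nat.find_min hex hk
  generalize Nat.find hex = m at hm hmin
  intro hc
  obtain ⟨N, hN⟩ := hc.exists_nat_pow_eq
  have key : ∀ n : ℕ, ∃ k < m, ((Equiv.swap s t * h) ^ n) s = (h ^ k) s := by
    intro n
    induction n with
    | zero =>
      refine ⟨0, ?_, rfl⟩
      rcases Nat.eq_zero_or_pos m with h0 | h0
      · subst h0; exact absurd hm hst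
      · exact h0
    | succ n ih =>
      obtain ⟨k, hk, hk'⟩ := ih
      rw [pow_succ', Equiv.Perm.mul_apply, hk', Equiv.Perm.mul_apply, ← Equiv.Perm.mul_apply h,
        ← pow_succ']
      by_cases h1 : k + 1 = m
      · rw [h1, hm]
        exact ⟨0, by omega, by simp⟩
      by_cases h2 : (h ^ (k+1)) s = s
      · exfalso
        -- minimality contradiction
        have h3 : (h ^ (m - (k+1))) s = t := by
          conv_lhs => rw [← h2]
          rw [← Equiv.Perm.mul_apply, ← pow_add, Nat.sub_add_cancel (by omega), hm]
        exact hmin _ (by omega) h3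
      · exact ⟨k+1, by omega, Equiv.swap_apply_of_ne_of_ne h2 (hmin _ (by omega))⟩
  obtain ⟨k, hk, hk'⟩ := key N
  exact hmin k hk (hk' ▸ hN)

theorem cycleTypeFull_eq {X : Type*} [Fintype X] [DecidableEq X] (h : Equiv.Perm X) :
    cycleTypeFull h = (orbitsF h).val.map Finset.card := by
  classical
  have e : orbitsF h = (h.cycleFactorsFinset.image Equiv.Perm.support).disjUnion
      ((Finset.univ.filter fun x => h x = x).image (fun x => {x})) (by
        rw [Finset.disjoint_left]
        intro A hA hB
        simp only [Finset.mem_image, Finset.mem_filter, Finset.mem_univ, true_and] at hA hB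
        obtain ⟨c, hc, rfl⟩ := hA
        obtain ⟨x, hx, hx'⟩ := hB
        have := (Equiv.Perm.mem_cycleFactorsFinset_iff.1 hc).1.two_le_card_support
        rw [← hx'] at this
        simp at this) := by
    ext A
    simp only [orbitsF, Finset.mem_disjUnion, Finset.mem_image, Finset.mem_filter,
      Finset.mem_univ, true_and]
    have fixd : ∀ x, h x = x → Finset.univ.filter (fun y => h.SameCycle x y) = {x} := by
      intro x hx
      ext y
      simp only [Finset.mem_filter, Finset.mem_univ, true_and, Finset.mem_singleton]
      constructor
      · intro hxy
        exact (hxy.eq_of_left hx).symm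
      · rintro rfl; exact Equiv.Perm.SameCycle.refl _ _
    have cyc : ∀ x, h x ≠ x →
        Finset.univ.filter (fun y => h.SameCycle x y) = (h.cycleOf x).support := by
      intro x hx
      ext y
      simp only [Finset.mem_filter, Finset.mem_univ, true_and]
      rw [Equiv.Perm.mem_support_cycleOf_iff' hx]
    constructor
    · rintro ⟨x, rfl⟩
      by_cases hx : h x = x
      · right; exact ⟨x, hx, (fixd x hx).symm⟩
      · left
        exact ⟨h.cycleOf x, by simpa [Equiv.Perm.cycleOf_mem_cycleFactorsFinset_iff] using hx,
          (cyc x hx).symm⟩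
    · rintro (⟨c, hc, rfl⟩ | ⟨x, hx, rfl⟩)
      · obtain ⟨x, hx⟩ := (Equiv.Perm.mem_cycleFactorsFinset_iff.1 hc).1.nonempty_support
        refine ⟨x, ?_⟩
        have hx' : x ∈ h.support := Equiv.Perm.mem_cycleFactorsFinset_support_le hc hx
        rw [cyc x (by simpa using hx'), ← Equiv.Perm.cycle_is_cycleOf hx hc]
      · exact ⟨x, fixd x hx⟩
  have i1 : Set.InjOn Equiv.Perm.support (h.cycleFactorsFinset : Set (Equiv.Perm X)) := by
    intro c hc d hd hcd
    obtain ⟨x, hx⟩ := (Equiv.Perm.mem_cycleFactorsFinset_iff.1 hc).1.nonempty_support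
    rw [Equiv.Perm.cycle_is_cycleOf hx hc, Equiv.Perm.cycle_is_cycleOf (hcd ▸ hx) hd]
  rw [e, Finset.disjUnion_val, Multiset.map_add, Finset.image_val_of_injOn i1,
    Finset.image_val_of_injOn (Finset.singleton_injective.injOn), Multiset.map_map,
    Multiset.map_map, cycleTypeFull, Equiv.Perm.cycleType_def]
  congr 1
  simp
  rfl

theorem join_case {X : Type*} [Fintype X] [DecidableEq X] (h : Equiv.Perm X) (s t : X)
    (hn : ¬ h.SameCycle s t) : ∃ (i j : ℕ) (m : Multiset ℕ), 0 < i ∧ 0 < j ∧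
      cycleTypeFull h = i ::ₘ j ::ₘ m ∧
      cycleTypeFull (Equiv.swap s t * h) = (i + j) ::ₘ m := by
  classical
  set h' := Equiv.swap s t * h with hh'
  have hts : h'.SameCycle t s := join_same h s t hn
  have E' := sameCycle_equivalence h'
  have l1 : ∀ {x y}, h.SameCycle x y → h'.SameCycle x y := by
    intro x y hxy
    refine sameCycle_le h _ E' (fun x => ?_) hxy
    have h1 : h'.SameCycle x (h' x) := ⟨1, by simp⟩
    refine h1.trans ?_
    have := swap_step _ E' s t hts.symm (h x)
    exact this.symm
  have l2 : ∀ {x y}, h'.SameCycle x y → (h.SameCycle x y ∨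
      ((h.SameCycle s x ∨ h.SameCycle t x) ∧ (h.SameCycle s y ∨ h.SameCycle t y))) := by
    intro x y hxy
    have EJ : Equivalence (fun x y => h.SameCycle x y ∨
      ((h.SameCycle s x ∨ h.SameCycle t x) ∧ (h.SameCycle s y ∨ h.SameCycle t y))) := by
      refine ⟨fun x => Or.inl (Equiv.Perm.SameCycle.refl _ _), ?_, ?_⟩
      · rintro x y (h1 | ⟨h1, h2⟩)
        · exact Or.inl h1.symm
        · exact Or.inr ⟨h2, h1⟩
      · rintro x y z (h1 | ⟨h1, h2⟩) (h3 | ⟨h3, h4⟩)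
        · exact Or.inl (h1.trans h3)
        · exact Or.inr ⟨h3.imp (fun h => h.trans h1.symm) (fun h => h.trans h1.symm), h4⟩
        · exact Or.inr ⟨h1, h2.imp (fun h => h.trans h3) (fun h => h.trans h3)⟩
        · exact Or.inr ⟨h1, h4⟩
    refine sameCycle_le h' _ EJ (fun x => ?_) hxy
    refine EJ.trans (y := h x) (Or.inl ⟨1, by simp⟩) ?_
    exact swap_step _ EJ s t (Or.inr ⟨Or.inl (Equiv.Perm.SameCycle.refl _ _),
      Or.inr (Equiv.Perm.SameCycle.refl _ _)⟩) (h x)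
  set O : X → Finset X := fun x => Finset.univ.filter (fun y => h.SameCycle x y) with hO
  set O' : X → Finset X := fun x => Finset.univ.filter (fun y => h'.SameCycle x y) with hO'
  have mO : ∀ x y, y ∈ O x ↔ h.SameCycle x y := by intro x y; simp [hO]
  have mO' : ∀ x y, y ∈ O' x ↔ h'.SameCycle x y := by intro x y; simp [hO']
  have eO : ∀ x y, O x = O y ↔ h.SameCycle x y := by
    intro x y
    constructor
    · intro e
      rw [← mO, e, mO]
    · intro e
      ext z
      rw [mO, mO]
      exact ⟨fun k => e.symm.trans k, fun k => e.trans k⟩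
  have eO' : ∀ x y, h'.SameCycle x y → O' x = O' y := by
    intro x y e
    ext z
    rw [mO', mO']
    exact ⟨fun k => e.symm.trans k, fun k => e.trans k⟩
  have hU : O' s = O s ∪ O t := by
    ext z
    rw [Finset.mem_union, mO, mO, mO']
    constructor
    · intro k
      rcases l2 k with k | k
      · exact Or.inl k
      · exact k.2
    · rintro (k | k)
      · exact l1 k
      · exact hts.symm.trans (l1 k)
  have hrest : ∀ x, ¬ h.SameCycle s x → ¬ h.SameCycle t x → O' x = O x := by
    intro x h1 h2
    ext z
    rw [mO, mO']
    constructor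
    · intro k
      rcases l2 k with k | k
      · exact k
      · exact absurd k.1 (by tauto)
    · exact l1
  have hd : Disjoint (O s) (O t) := by
    rw [Finset.disjoint_left]
    intro z h1 h2
    rw [mO] at h1 h2
    exact hn (h1.trans h2.symm)
  set R : Finset (Finset X) :=
    (Finset.univ.filter (fun x => ¬ h.SameCycle s x ∧ ¬ h.SameCycle t x)).image O with hR
  have mR : ∀ A, A ∈ R ↔ ∃ x, (¬ h.SameCycle s x ∧ ¬ h.SameCycle t x) ∧ O x = A := by
    intro A; simp [hR]
  have n1 : O t ∉ R := by
    rw [mR]; rintro ⟨x, ⟨_, k⟩, e⟩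
    exact k ((eO _ _).1 e.symm)
  have n2 : O s ∉ insert (O t) R := by
    rw [Finset.mem_insert, mR]; rintro (e | ⟨x, ⟨k, _⟩, e⟩)
    · exact hn ((eO _ _).1 e)
    · exact k ((eO _ _).1 e.symm)
  have n3 : O' s ∉ R := by
    rw [mR]; rintro ⟨x, ⟨k, _⟩, e⟩
    have : s ∈ O x := by rw [e, mO']
    rw [mO] at this
    exact k this.symm
  have e1 : orbitsF h = insert (O s) (insert (O t) R) := by
    ext A
    rw [Finset.mem_insert, Finset.mem_insert, mR]
    have : A ∈ orbitsF h ↔ ∃ x, O x = A := by simp [orbitsF, hO]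
    rw [this]
    constructor
    · rintro ⟨x, rfl⟩
      by_cases k1 : h.SameCycle s x
      · exact Or.inl ((eO _ _).2 k1.symm)
      by_cases k2 : h.SameCycle t x
      · exact Or.inr (Or.inl ((eO _ _).2 k2.symm))
      exact Or.inr (Or.inr ⟨x, ⟨k1, k2⟩, rfl⟩)
    · rintro (rfl | rfl | ⟨x, _, rfl⟩) <;> exact ⟨_, rfl⟩
  have e2 : orbitsF h' = insert (O' s) R := by
    ext A
    rw [Finset.mem_insert, mR]
    have : A ∈ orbitsF h' ↔ ∃ x, O' x = A := by simp [orbitsF, hO']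
    rw [this]
    constructor
    · rintro ⟨x, rfl⟩
      by_cases k1 : h.SameCycle s x
      · exact Or.inl (eO' _ _ (l1 k1.symm))
      by_cases k2 : h.SameCycle t x
      · exact Or.inl (eO' _ _ ((l1 k2.symm).trans hts))
      exact Or.inr ⟨x, ⟨k1, k2⟩, (hrest x k1 k2).symm⟩
    · rintro (rfl | ⟨x, k, rfl⟩)
      · exact ⟨_, rfl⟩
      · exact ⟨x, hrest x k.1 k.2⟩
  refine ⟨(O s).card, (O t).card, R.val.map Finset.card, ?_, ?_, ?_, ?_⟩
  · exact Finset.card_pos.2 ⟨s, by rw [mO]⟩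
  · exact Finset.card_pos.2 ⟨t, by rw [mO]⟩
  · rw [cycleTypeFull_eq, e1, Finset.insert_val_of_notMem n2, Finset.insert_val_of_notMem n1,
      Multiset.map_cons, Multiset.map_cons]
  · rw [cycleTypeFull_eq, e2, Finset.insert_val_of_notMem n3, Multiset.map_cons, hU,
      Finset.card_union_of_disjoint hd]

/-- for a permutation `h` of a finite set `X` and points `s ≠ t`, the cycle
type (including fixed points) of `swap s t ∘ h` is obtained from that of `h` in exactly one
of the two ways: (join) two parts `i`, `j` are removed and one part `i + j` is added, or
(cut) one part `k` is removed and two parts `a`, `b` with `a + b = k` are added. -/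
theorem swap_mul_cycleTypeFull_join_xor_cut
    {X : Type*} [Fintype X] [DecidableEq X] (h : Equiv.Perm X) (s t : X) (hst : s ≠ t) :
    Xor'
      (∃ i j : ℕ, i ∈ cycleTypeFull h ∧ j ∈ (cycleTypeFull h).erase i ∧
        cycleTypeFull (Equiv.swap s t * h)
          = ((cycleTypeFull h).erase i).erase j + {i + j})
      (∃ k a b : ℕ, k ∈ cycleTypeFull h ∧ 0 < a ∧ 0 < b ∧ a + b = k ∧
        cycleTypeFull (Equiv.swap s t * h)
          = (cycleTypeFull h).erase k + {a, b}) := by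
  have card_ne : ¬ ((∃ i j : ℕ, i ∈ cycleTypeFull h ∧ j ∈ (cycleTypeFull h).erase i ∧
        cycleTypeFull (Equiv.swap s t * h)
          = ((cycleTypeFull h).erase i).erase j + {i + j}) ∧
      (∃ k a b : ℕ, k ∈ cycleTypeFull h ∧ 0 < a ∧ 0 < b ∧ a + b = k ∧
        cycleTypeFull (Equiv.swap s t * h)
          = (cycleTypeFull h).erase k + {a, b})) := by
    rintro ⟨⟨i, j, hi, hj, e⟩, ⟨k, a, b, hk, -, -, -, e'⟩⟩
    have c1 := congrArg Multiset.card e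
    have c2 := congrArg Multiset.card e'
    have c3 := Multiset.card_erase_add_one hi
    have c4 := Multiset.card_erase_add_one hj
    have c5 := Multiset.card_erase_add_one hk
    simp only [Multiset.card_add, Multiset.card_singleton, Multiset.card_pair] at c1 c2
    omega
  by_cases hs : h.SameCycle s t
  · refine Or.inr ⟨?_, fun hj => card_ne ⟨hj, ?_⟩⟩
    all_goals
      obtain ⟨i, j, m, hi, hj, e1, e2⟩ := join_case _ s t (cut_not_same h s t hst hs)
      rw [← mul_assoc, Equiv.swap_mul_self, one_mul] at e2
      refine ⟨i + j, i, j, by simp [e2], hi, hj, rfl, ?_⟩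
      rw [e1, e2, Multiset.erase_cons_head, add_comm]
      simp [Multiset.insert_eq_cons, Multiset.cons_add, Multiset.singleton_add]
  · refine Or.inl ⟨?_, fun hj => card_ne ⟨?_, hj⟩⟩
    all_goals
      obtain ⟨i, j, m, hi, hj, e1, e2⟩ := join_case h s t hs
      refine ⟨i, j, by simp [e1], by simp [e1], ?_⟩
      rw [e1, e2, Multiset.erase_cons_head, Multiset.erase_cons_head, add_comm m]
      rfl
end

section
/- Let h be a permutation of a finite set X of size d with cycle type μ (including fixed points), and let i < j be positive integers. Then the number of transpositions τ of X such that the cycle type of τ∘h equals μ with one part equal to i and one part equal to j removed and one part equal to i+j added is exactly i·j·m_i(μ)·m_j(μ). -/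
open Finset Equiv

open scoped Classical in
/-- the cycle of a point. -/
noncomputable def cyc {X : Type*} [Fintype X] (h : Equiv.Perm X) (x : X) : Finset X :=
  Finset.univ.filter fun y => h.SameCycle x y

lemma mem_cyc {X : Type*} [Fintype X] (h : Equiv.Perm X) (x y : X) :
    y ∈ cyc h x ↔ h.SameCycle x y := by
  simp [cyc]

lemma cyc_pos {X : Type*} [Fintype X] (h : Equiv.Perm X) (x : X) : 0 < (cyc h x).card :=
  Finset.card_pos.2 ⟨x, (mem_cyc h x x).2 (Equiv.Perm.SameCycle.refl _ _)⟩

lemma cyc_eq {X : Type*} [Fintype X] (h : Equiv.Perm X) {x y : X} (hxy : h.SameCycle x y) :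
    cyc h x = cyc h y := by
  ext z
  rw [mem_cyc, mem_cyc]
  exact ⟨fun H => hxy.symm.trans H, fun H => hxy.trans H⟩

lemma cyc_support {X : Type*} [Fintype X] [DecidableEq X] (h : Equiv.Perm X) {x : X}
    (hx : h x ≠ x) : (h.cycleOf x).support = cyc h x := by
  ext y
  rw [mem_cyc, Equiv.Perm.mem_support_cycleOf_iff]
  simp [hx]

lemma cyc_fixed {X : Type*} [Fintype X] (h : Equiv.Perm X) {x : X}
    (hx : h x = x) : cyc h x = {x} := by
  ext y
  rw [mem_cyc, Finset.mem_singleton]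
  constructor
  · intro H
    exact (H.eq_of_left hx).symm
  · rintro rfl
    exact Equiv.Perm.SameCycle.refl _ _

lemma count_zero_full {X : Type*} [Fintype X] [DecidableEq X] (h : Equiv.Perm X) :
    (cycleTypeFull h).count 0 = 0 := by
  rw [Multiset.count_eq_zero, cycleTypeFull, Multiset.mem_add]
  rintro (H | H)
  · have := Equiv.Perm.two_le_of_mem_cycleType H
    omega
  · have := Multiset.eq_of_mem_replicate H
    omega

lemma count_full {X : Type*} [Fintype X] [DecidableEq X] (h : Equiv.Perm X) (n : ℕ) :
    n * (cycleTypeFull h).count n = (Finset.univ.filter fun x => (cyc h x).card = n).card := by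
  rcases Nat.eq_zero_or_pos n with rfl | hn
  · have : (Finset.univ.filter fun x => (cyc h x).card = 0) = ∅ := by
      apply Finset.filter_false_of_mem
      intro x _
      exact (cyc_pos h x).ne'
    rw [this, zero_mul, Finset.card_empty]
  have hfix : ∀ x, (cyc h x).card = 1 ↔ h x = x := by
    intro x
    constructor
    · intro H
      by_contra hx
      rw [← cyc_support h hx] at H
      exact Equiv.Perm.card_support_ne_one _ H
    · intro H
      rw [cyc_fixed h H, Finset.card_singleton]
  rcases Nat.lt_or_ge n 2 with h2 | h2
  · obtain rfl : n = 1 := by omega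
    have h0 : Multiset.count 1 h.cycleType = 0 := by
      rw [Multiset.count_eq_zero]
      intro H
      have := Equiv.Perm.two_le_of_mem_cycleType H
      omega
    simp [cycleTypeFull, h0, hfix]
  · have h0 : Multiset.count n (cycleTypeFull h) = Multiset.count n h.cycleType := by
      have : ¬ (1 = n) := by omega
      simp [cycleTypeFull, Multiset.count_replicate, this]
    have hmv : ∀ x, (cyc h x).card = n → h x ≠ x := by
      intro x hx H
      have := (hfix x).2 H
      omega
    have h1 : Multiset.count n h.cycleType
        = (h.cycleFactorsFinset.filter fun c => c.support.card = n).card := by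
      rw [Equiv.Perm.cycleType_def, Multiset.count_map, ← Finset.filter_val, Finset.card_val]
      congr 1
      ext c
      simp [eq_comm]
    rw [h0, h1, Finset.card_eq_sum_card_fiberwise
      (t := h.cycleFactorsFinset.filter fun c => c.support.card = n) (f := fun x => h.cycleOf x)]
    · rw [Finset.sum_const_nat (m := n), mul_comm]
      intro c hc
      rw [Finset.mem_filter] at hc
      rw [← hc.2]
      congr 1
      ext x
      simp only [Finset.mem_filter, Finset.mem_univ, true_and]
      constructor
      · rintro ⟨hx, rfl⟩
        rw [cyc_support h (hmv x (hx.trans hc.2)), mem_cyc]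
      · intro hx
        have := Equiv.Perm.cycle_is_cycleOf hx hc.1
        refine ⟨?_, this.symm⟩
        rw [this, cyc_support h]
        have := Equiv.Perm.mem_cycleFactorsFinset_support_le hc.1 hx
        simpa using this
    · intro x hx
      simp only [Finset.coe_filter, Finset.mem_univ, true_and, Set.mem_ofPred_eq] at hx ⊢
      refine ⟨?_, by rw [cyc_support h (hmv x hx), hx]⟩
      rw [Equiv.Perm.cycleOf_mem_cycleFactorsFinset_iff, Equiv.Perm.mem_support]
      exact hmv x hx

lemma sum_full {X : Type*} [Fintype X] [DecidableEq X] (h : Equiv.Perm X) :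
    (cycleTypeFull h).sum = Fintype.card X := by
  have := h.partition.parts_sum
  rw [Equiv.Perm.parts_partition] at this
  rw [← this, cycleTypeFull]
  congr 3
  rw [← Finset.card_compl]
  congr 1
  ext x
  simp

lemma sum_sq_full {X : Type*} [Fintype X] [DecidableEq X] (h : Equiv.Perm X) :
    ((cycleTypeFull h).map fun n => n * n).sum = ∑ x, (cyc h x).card := by
  rw [Finset.sum_multiset_map_count]
  have hm : ∀ x ∈ (Finset.univ : Finset X), (cyc h x).card ∈ (cycleTypeFull h).toFinset := by
    intro x _
    rw [Multiset.mem_toFinset, ← Multiset.count_pos]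
    have h1 := count_full h (cyc h x).card
    have h2 : 0 < (Finset.univ.filter fun y => (cyc h y).card = (cyc h x).card).card :=
      Finset.card_pos.2 ⟨x, by simp⟩
    rw [← h1] at h2
    exact Nat.pos_of_mul_pos_left h2
  rw [← Finset.sum_fiberwise_of_maps_to hm]
  apply Finset.sum_congr rfl
  intro n _
  rw [Finset.sum_const_nat (m := n), ← count_full]
  · simp only [smul_eq_mul]; ring
  · intro x hx
    exact (Finset.mem_filter.1 hx).2

/-- a relation that is preserved by one step is preserved along cycles. -/
lemma sameCycle_of_step {X : Type*} [Fintype X] (g : Equiv.Perm X) (r : X → X → Prop)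
    (hr : Equivalence r) (hs : ∀ x, r x (g x)) {x y : X} (hxy : g.SameCycle x y) : r x y := by
  obtain ⟨n, rfl⟩ := hxy.exists_nat_pow_eq
  clear hxy
  induction n with
  | zero => exact hr.refl _
  | succ k ih =>
    rw [pow_succ', Equiv.Perm.mul_apply]
    exact hr.trans ih (hs _)

lemma same_refine {X : Type*} [Fintype X] [DecidableEq X] (h : Equiv.Perm X) {s t : X}
    (hst : h.SameCycle s t) {x y : X} (hxy : (swap s t * h).SameCycle x y) : h.SameCycle x y := by
  refine sameCycle_of_step _ (fun x y => h.SameCycle x y)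
    (Equiv.Perm.SameCycle.equivalence h) ?_ hxy
  intro x
  have h1 : h.SameCycle x (h x) := Equiv.Perm.sameCycle_apply_right.2 (Equiv.Perm.SameCycle.refl _ _)
  rw [Equiv.Perm.mul_apply]
  by_cases hs : h x = s
  · rw [hs, swap_apply_left]; rw [hs] at h1; exact h1.trans hst
  by_cases ht : h x = t
  · rw [ht, swap_apply_right]; rw [ht] at h1; exact h1.trans hst.symm
  rwa [swap_apply_of_ne_of_ne hs ht]

lemma joined {X : Type*} [Fintype X] [DecidableEq X] (h : Equiv.Perm X) {s t : X}
    (hst : ¬ h.SameCycle s t) : (swap s t * h).SameCycle s t := by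
  have hex : ∃ n, 0 < n ∧ (h ^ n) s = s :=
    ⟨orderOf h, orderOf_pos h, by rw [pow_orderOf_eq_one]; rfl⟩
  classical
  obtain ⟨hn, hns⟩ := Nat.find_spec hex
  have hmin := fun m => @Nat.find_min _ _ hex m
  generalize Nat.find hex = n at hn hns hmin
  have key : ∀ k, k < n → ((swap s t * h) ^ k) s = (h ^ k) s := by
    intro k
    induction k with
    | zero => intro _; rfl
    | succ k ih =>
      intro hk
      rw [pow_succ', Equiv.Perm.mul_apply, ih (by omega), pow_succ' h, Equiv.Perm.mul_apply,
        Equiv.Perm.mul_apply, ← Equiv.Perm.mul_apply h, ← pow_succ']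
      apply swap_apply_of_ne_of_ne
      · intro H
        exact hmin _ hk ⟨by omega, H⟩
      · intro H
        exact hst ⟨(k + 1 : ℕ), by rw [zpow_natCast]; exact H⟩
  obtain ⟨k, rfl⟩ : ∃ k, n = k + 1 := ⟨n - 1, by omega⟩
  refine ⟨(k + 1 : ℕ), ?_⟩
  rw [zpow_natCast, pow_succ', Equiv.Perm.mul_apply, key k (by omega), Equiv.Perm.mul_apply,
    ← Equiv.Perm.mul_apply h, ← pow_succ', hns, swap_apply_left]

lemma join_coarsen {X : Type*} [Fintype X] [DecidableEq X] (h : Equiv.Perm X) {s t : X}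
    (hst : ¬ h.SameCycle s t) {x y : X} (hxy : h.SameCycle x y) :
    (swap s t * h).SameCycle x y := by
  apply same_refine (swap s t * h) (joined h hst)
  rwa [← mul_assoc, swap_mul_self, one_mul]

lemma join_iff {X : Type*} [Fintype X] [DecidableEq X] (h : Equiv.Perm X) {s t : X}
    (hst : ¬ h.SameCycle s t) {x y : X} :
    (swap s t * h).SameCycle x y ↔ h.SameCycle x y ∨
      ((h.SameCycle s x ∨ h.SameCycle t x) ∧ (h.SameCycle s y ∨ h.SameCycle t y)) := by
  have J := joined h hst
  constructor
  · intro H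
    refine sameCycle_of_step _ (fun x y => h.SameCycle x y ∨
      ((h.SameCycle s x ∨ h.SameCycle t x) ∧ (h.SameCycle s y ∨ h.SameCycle t y))) ?_ ?_ H
    · refine ⟨fun x => Or.inl (Equiv.Perm.SameCycle.refl _ _), ?_, ?_⟩
      · rintro x y (H | ⟨H, K⟩)
        · exact Or.inl H.symm
        · exact Or.inr ⟨K, H⟩
      · rintro x y z (H | ⟨H, K⟩) (H' | ⟨H', K'⟩)
        · exact Or.inl (H.trans H')
        · exact Or.inr ⟨H'.imp (fun a => a.trans H.symm) (fun a => a.trans H.symm), K'⟩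
        · exact Or.inr ⟨H, K.imp (fun a => a.trans H') (fun a => a.trans H')⟩
        · exact Or.inr ⟨H, K'⟩
    · intro x
      have h1 : h.SameCycle x (h x) :=
        Equiv.Perm.sameCycle_apply_right.2 (Equiv.Perm.SameCycle.refl _ _)
      rw [Equiv.Perm.mul_apply]
      by_cases hs : h x = s
      · rw [hs, swap_apply_left]; rw [hs] at h1
        exact Or.inr ⟨Or.inl h1.symm, Or.inr (Equiv.Perm.SameCycle.refl _ _)⟩
      by_cases ht : h x = t
      · rw [ht, swap_apply_right]; rw [ht] at h1
        exact Or.inr ⟨Or.inr h1.symm, Or.inl (Equiv.Perm.SameCycle.refl _ _)⟩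
      rw [swap_apply_of_ne_of_ne hs ht]
      exact Or.inl h1
  · rintro (H | ⟨H, K⟩)
    · exact join_coarsen h hst H
    · have e : ∀ z, (h.SameCycle s z ∨ h.SameCycle t z) → (swap s t * h).SameCycle s z := by
        rintro z (H | H)
        · exact join_coarsen h hst H
        · exact J.trans (join_coarsen h hst H)
      exact (e x H).symm.trans (e y K)

lemma join_full {X : Type*} [Fintype X] [DecidableEq X] (h : Equiv.Perm X) {s t : X}
    (hst : ¬ h.SameCycle s t) :
    cycleTypeFull (swap s t * h) + {(cyc h s).card, (cyc h t).card}
      = cycleTypeFull h + {(cyc h s).card + (cyc h t).card} := by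
  have hdisj : Disjoint (cyc h s) (cyc h t) := by
    rw [Finset.disjoint_left]
    intro x hx hy
    rw [mem_cyc] at hx hy
    exact hst (hx.trans hy.symm)
  have hU : ∀ x ∈ cyc h s ∪ cyc h t, cyc (swap s t * h) x = cyc h s ∪ cyc h t := by
    intro x hx
    ext y
    rw [Finset.mem_union, mem_cyc, mem_cyc] at hx
    rw [mem_cyc, join_iff h hst, Finset.mem_union, mem_cyc, mem_cyc]
    constructor
    · rintro (H | H)
      · exact hx.imp (fun a => a.trans H) (fun a => a.trans H)
      · exact H.2
    · intro H
      exact Or.inr ⟨hx, H⟩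
  have hV : ∀ x ∈ (cyc h s ∪ cyc h t)ᶜ, cyc (swap s t * h) x = cyc h x := by
    intro x hx
    ext y
    rw [Finset.mem_compl, Finset.mem_union, mem_cyc, mem_cyc] at hx
    rw [mem_cyc, join_iff h hst, mem_cyc]
    tauto
  have hs : ∀ x ∈ cyc h s, (cyc h x).card = (cyc h s).card := by
    intro x hx
    rw [mem_cyc] at hx
    rw [cyc_eq h hx]
  have ht : ∀ x ∈ cyc h t, (cyc h x).card = (cyc h t).card := by
    intro x hx
    rw [mem_cyc] at hx
    rw [cyc_eq h hx]
  have hcU := Finset.card_union_of_disjoint hdisj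
  have split : ∀ p : X → Prop, [DecidablePred p] → (Finset.univ.filter p).card
      = ((cyc h s).filter p).card + ((cyc h t).filter p).card
        + ((cyc h s ∪ cyc h t)ᶜ.filter p).card := by
    intro p _
    rw [← Finset.card_union_of_disjoint (Finset.disjoint_filter_filter hdisj),
      ← Finset.filter_union, ← Finset.card_union_of_disjoint
        (Finset.disjoint_filter_filter disjoint_compl_right), ← Finset.filter_union,
      Finset.union_compl]
  have hconst : ∀ (A : Finset X) (f : X → ℕ) (c n : ℕ), (∀ x ∈ A, f x = c) →
      (A.filter fun x => f x = n).card = if n = c then A.card else 0 := by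
    intro A f c n H
    split_ifs with hc
    · rw [Finset.filter_true_of_mem]
      intro x hx
      rw [H x hx, hc]
    · rw [Finset.filter_false_of_mem, Finset.card_empty]
      intro x hx
      rw [H x hx]
      exact fun a => hc a.symm
  have hgU : ∀ x ∈ cyc h s ∪ cyc h t,
      (cyc (swap s t * h) x).card = (cyc h s).card + (cyc h t).card := by
    intro x hx
    rw [hU x hx, hcU]
  have ps := cyc_pos h s
  have pt := cyc_pos h t
  ext n
  rw [Multiset.count_add, Multiset.count_add, Multiset.insert_eq_cons, Multiset.count_cons,
    Multiset.count_singleton, Multiset.count_singleton]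
  rcases Nat.eq_zero_or_pos n with rfl | hn
  · rw [count_zero_full, count_zero_full, if_neg (by omega), if_neg (by omega), if_neg (by omega)]
  · apply Nat.eq_of_mul_eq_mul_left hn
    rw [mul_add, mul_add, mul_add, count_full, count_full, split, split (fun x => (cyc h x).card = n),
      hconst (cyc h s) _ _ n hs, hconst (cyc h t) _ _ n ht,
      hconst (cyc h s) _ _ n (fun x hx => hgU x (Finset.mem_union_left _ hx)),
      hconst (cyc h t) _ _ n (fun x hx => hgU x (Finset.mem_union_right _ hx))]
    have : ((cyc h s ∪ cyc h t)ᶜ.filter fun x => (cyc (swap s t * h) x).card = n)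
        = ((cyc h s ∪ cyc h t)ᶜ.filter fun x => (cyc h x).card = n) := by
      apply Finset.filter_congr
      intro x hx
      rw [hV x hx]
    rw [this]
    split_ifs <;> simp only [mul_add, mul_one, mul_zero] <;> omega

lemma erase_iff (M N : Multiset ℕ) (i j k : ℕ) (hij : i ≠ j) (hi : i ∈ M) (hj : j ∈ M) :
    N = (M.erase i).erase j + {k} ↔ N + {i, j} = M + {k} := by
  have hj' : j ∈ M.erase i := (Multiset.mem_erase_of_ne hij.symm).2 hj
  have e : M = (M.erase i).erase j + {i, j} := by
    conv_lhs => rw [← Multiset.cons_erase hi, ← Multiset.cons_erase hj']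
    rw [Multiset.insert_eq_cons, ← Multiset.singleton_add, ← Multiset.singleton_add,
      ← Multiset.singleton_add]
    abel
  generalize (M.erase i).erase j = M' at e
  subst e
  rw [add_right_comm, add_left_inj]

/-- for a permutation `h` with cycle type `μ` (including fixed points) and
positive integers `i < j`, the number of transpositions `τ` such that the cycle type of
`τ ∘ h` is `μ` with one part `i` and one part `j` removed and one part `i + j` added is
exactly `i · j · m_i(μ) · m_j(μ)`. -/
theorem count_join_transpositions_ne
    {X : Type*} [Fintype X] [DecidableEq X] (h : Equiv.Perm X) (i j : ℕ)
    (hi : 0 < i) (hij : i < j) :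
    Set.ncard {τ : Equiv.Perm X | τ.IsSwap ∧
        cycleTypeFull (τ * h)
          = ((cycleTypeFull h).erase i).erase j + {i + j}}
      = i * j * (cycleTypeFull h).count i * (cycleTypeFull h).count j := by
  have hcnt : ∀ x, (cyc h x).card ∈ cycleTypeFull h := by
    intro x
    rw [← Multiset.count_pos]
    have h1 := count_full h (cyc h x).card
    have h2 : 0 < (Finset.univ.filter fun y => (cyc h y).card = (cyc h x).card).card :=
      Finset.card_pos.2 ⟨x, by simp⟩
    rw [← h1] at h2
    exact Nat.pos_of_mul_pos_left h2
  have hset : {τ : Equiv.Perm X | τ.IsSwap ∧ cycleTypeFull (τ * h)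
          = ((cycleTypeFull h).erase i).erase j + {i + j}}
      = (((Finset.univ.filter fun x => (cyc h x).card = i) ×ˢ
          (Finset.univ.filter fun x => (cyc h x).card = j)).image
            (fun p => swap p.1 p.2) : Finset (Equiv.Perm X)) := by
    ext τ
    simp only [Set.mem_ofPred_eq, Finset.coe_image, Set.mem_image, Finset.mem_coe,
      Finset.mem_product, Finset.mem_filter, Finset.mem_univ, true_and, Prod.exists]
    constructor
    · rintro ⟨⟨s, t, hne, rfl⟩, H⟩
      have hsum := congrArg Multiset.sum H
      rw [sum_full, Multiset.sum_add, Multiset.sum_singleton, ← sum_full h] at hsum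
      have hiM : i ∈ cycleTypeFull h := by
        by_contra hc
        rw [Multiset.erase_of_notMem hc] at hsum
        by_cases hj : j ∈ cycleTypeFull h
        · have := Multiset.sum_erase hj
          omega
        · rw [Multiset.erase_of_notMem hj] at hsum
          omega
      have hjM : j ∈ cycleTypeFull h := by
        by_contra hc
        have := Multiset.sum_erase hiM
        rw [Multiset.erase_of_notMem (fun a => hc (Multiset.mem_of_mem_erase a))] at hsum
        omega
      rw [erase_iff _ _ _ _ _ hij.ne hiM hjM] at H
      have hns : ¬ h.SameCycle s t := by
        intro hst
        have hle : ∑ x, (cyc (swap s t * h) x).card ≤ ∑ x, (cyc h x).card := by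
          apply Finset.sum_le_sum
          intro x _
          apply Finset.card_le_card
          intro y hy
          rw [mem_cyc] at hy ⊢
          exact same_refine h hst hy
        have := congrArg (fun M => (Multiset.map (fun n => n * n) M).sum) H
        simp only [Multiset.map_add, Multiset.sum_add, sum_sq_full, Multiset.insert_eq_cons,
          Multiset.map_cons, Multiset.sum_cons, Multiset.map_singleton,
          Multiset.sum_singleton] at this
        nlinarith [Nat.mul_pos hi (hi.trans hij)]
      have J := join_full h hns
      have ps := cyc_pos h s
      have pt := cyc_pos h t
      generalize hA : (cyc h s).card = a at *
      generalize hB : (cyc h t).card = b at *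
      have E : ({i, j} : Multiset ℕ) + {a + b} = {a, b} + {i + j} := by
        have : cycleTypeFull (swap s t * h) + cycleTypeFull h + ({i, j} + {a + b})
            = cycleTypeFull (swap s t * h) + cycleTypeFull h + ({a, b} + {i + j}) := by
          calc _ = (cycleTypeFull (swap s t * h) + {i, j}) + (cycleTypeFull h + {a + b}) := by abel
            _ = (cycleTypeFull h + {i + j}) + (cycleTypeFull (swap s t * h) + {a, b}) := by
              rw [H, J]
            _ = _ := by abel
        exact add_left_cancel this
      have m1 : i + j ∈ ({i, j} : Multiset ℕ) + {a + b} := by rw [E]; simp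
      have m2 : i ∈ ({a, b} : Multiset ℕ) + {i + j} := by rw [← E]; simp
      simp only [Multiset.insert_eq_cons, Multiset.mem_add, Multiset.mem_cons,
        Multiset.mem_singleton] at m1 m2
      have hab : (a = i ∧ b = j) ∨ (a = j ∧ b = i) := by omega
      rcases hab with ⟨h1, h2⟩ | ⟨h1, h2⟩
      · exact ⟨s, t, ⟨hA.trans h1, hB.trans h2⟩, rfl⟩
      · exact ⟨t, s, ⟨hB.trans h2, hA.trans h1⟩, swap_comm _ _⟩
    · rintro ⟨s, t, ⟨hs, ht⟩, rfl⟩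
      have hns : ¬ h.SameCycle s t := by
        intro H
        rw [cyc_eq h H] at hs
        omega
      refine ⟨⟨s, t, ?_, rfl⟩, ?_⟩
      · rintro rfl
        omega
      · rw [erase_iff _ _ _ _ _ hij.ne (hs ▸ hcnt s) (ht ▸ hcnt t)]
        have := join_full h hns
        rwa [hs, ht] at this
  rw [hset, Set.ncard_coe_finset, Finset.card_image_of_injOn, Finset.card_product,
    ← count_full, ← count_full]
  · ring
  · rintro ⟨s, t⟩ hst ⟨u, v⟩ huv heq
    simp only [Finset.coe_product, Finset.coe_filter, Finset.mem_univ, true_and, Set.mem_prod,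
      Set.mem_ofPred_eq] at hst huv heq
    have hne : s ≠ t := by
      rintro rfl
      omega
    have e1 : swap u v s = t := by rw [← heq, swap_apply_left]
    by_cases hsu : s = u
    · subst hsu
      rw [swap_apply_left] at e1
      rw [e1]
    · by_cases hsv : s = v
      · subst hsv
        omega
      · rw [swap_apply_of_ne_of_ne hsu hsv] at e1
        exact absurd e1 hne
end

section
/- Let h be a permutation of a finite set X of size d with cycle type μ (including fixed points), and let i be a positive integer. Then the number of transpositions τ of X such that the cycle type of τ∘h equals μ with one part equal to 2i removed and two parts equal to i added is exactly i·m_{2i}(μ). -/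
open Finset Equiv

set_option linter.unusedSectionVars false

namespace CutCount

open Function

variable {X : Type*} [Fintype X] [DecidableEq X]

lemma minPer_pos (h : Perm X) (x : X) : 0 < minimalPeriod h x := by
  apply minimalPeriod_pos_of_mem_periodicPts
  exact (h.injective.mem_periodicPts x)

lemma minPer_eq_of (g : X → X) (x : X) (k : ℕ) (hk : 0 < k) (h1 : g^[k] x = x)
    (h2 : ∀ j, 0 < j → j < k → g^[j] x ≠ x) : minimalPeriod g x = k := by
  have hp : IsPeriodicPt g k x := h1
  refine le_antisymm (hp.minimalPeriod_le hk) ?_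
  by_contra! hlt
  exact h2 _ (hp.minimalPeriod_pos hk) hlt (iterate_minimalPeriod)

lemma minPer_eq_card (h : Perm X) (x : X) (hx : h x ≠ x) :
    minimalPeriod h x = #(h.cycleOf x).support := by
  have hc := Equiv.Perm.isCycle_cycleOf h hx
  rw [← hc.orderOf]
  apply Nat.dvd_antisymm
  · rw [← isPeriodicPt_iff_minimalPeriod_dvd]
    change h^[_] x = x
    rw [Equiv.Perm.iterate_eq_pow, ← Equiv.Perm.cycleOf_pow_apply_self, pow_orderOf_eq_one]
    rfl
  · rw [orderOf_dvd_iff_pow_eq_one, hc.pow_eq_one_iff]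
    refine ⟨x, by simpa using hx, ?_⟩
    rw [Equiv.Perm.cycleOf_pow_apply_self, ← Equiv.Perm.iterate_eq_pow]
    exact iterate_minimalPeriod

lemma minPer_one_iff (h : Perm X) (x : X) : minimalPeriod h x = 1 ↔ h x = x := by
  rw [minimalPeriod_eq_one_iff_isFixedPt]; rfl

lemma card_eq_mul_count (h : Perm X) (k : ℕ) (hk : 0 < k) :
    #{x | minimalPeriod h x = k} = k * (cycleTypeFull h).count k := by
  unfold cycleTypeFull
  rw [Multiset.count_add, Multiset.count_replicate]
  rcases Nat.lt_or_ge 1 k with h1 | h1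
  · rw [if_neg (by omega), add_zero, Equiv.Perm.CycleType.count_def, Fintype.card_subtype]
    have e : #(univ.filter fun c : {x // x ∈ h.cycleFactorsFinset} => #(c : Perm X).support = k)
        = #(h.cycleFactorsFinset.filter fun c => #c.support = k) := by
      refine Finset.card_bij (fun (c : {x // x ∈ h.cycleFactorsFinset}) _ => (c : Perm X)) ?_ ?_ ?_
      · intro c hc
        simpa using hc
      · intro c _ d _ hcd
        exact Subtype.ext hcd
      · intro c hc
        simp only [mem_filter] at hc
        exact ⟨⟨c, hc.1⟩, by simpa using hc.2, rfl⟩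
    rw [e]
    have := Finset.card_eq_sum_card_fiberwise (f := fun x => h.cycleOf x)
      (s := univ.filter fun x => minimalPeriod h x = k)
      (t := h.cycleFactorsFinset.filter fun c => #c.support = k) ?_
    · rw [this, Finset.sum_const_nat (m := k), mul_comm]
      intro c hc
      simp only [mem_filter] at hc
      rw [← hc.2]
      congr 1
      ext x
      simp only [mem_filter, mem_univ, true_and]
      constructor
      · rintro ⟨hx, rfl⟩
        rw [Equiv.Perm.mem_support, Equiv.Perm.cycleOf_apply_self]
        intro h2
        rw [← minPer_one_iff] at h2
        omega
      · intro hx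
        have hcc := Equiv.Perm.cycle_is_cycleOf hx hc.1
        refine ⟨?_, hcc.symm⟩
        rw [minPer_eq_card, ← hcc]
        rw [hcc] at hx
        simpa using hx
    · intro x hx
      simp only [coe_filter, mem_univ, true_and, Set.mem_ofPred_eq] at hx ⊢
      have hne : h x ≠ x := by
        intro h2
        rw [← minPer_one_iff] at h2
        omega
      rw [Equiv.Perm.cycleOf_mem_cycleFactorsFinset_iff, ← minPer_eq_card h x hne]
      exact ⟨by simpa using hne, hx⟩
  · obtain rfl : k = 1 := by omega
    rw [if_pos rfl, Multiset.count_eq_zero_of_notMem, zero_add, one_mul]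
    · simp_rw [minPer_one_iff]
    · intro hm
      exact absurd (Equiv.Perm.two_le_of_mem_cycleType hm) (by omega)

lemma agree (h : Perm X) (a b : X) (m : ℕ)
    (H : ∀ j, 0 < j → j < m → h^[j] a ≠ a ∧ h^[j] a ≠ b) :
    ∀ j, j < m → (⇑(swap a b * h))^[j] a = h^[j] a := by
  intro j
  induction j with
  | zero => simp
  | succ j ih =>
    intro hj
    rw [iterate_succ_apply', iterate_succ_apply', ih (by omega)]
    have := H (j+1) (by omega) hj
    rw [iterate_succ_apply'] at this
    exact swap_apply_of_ne_of_ne this.1 this.2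

lemma agree_end (h : Perm X) (a b : X) (m : ℕ) (hm : 0 < m)
    (H : ∀ j, 0 < j → j < m → h^[j] a ≠ a ∧ h^[j] a ≠ b) :
    (⇑(swap a b * h))^[m] a = swap a b (h^[m] a) := by
  obtain ⟨m, rfl⟩ : ∃ m', m = m' + 1 := ⟨m - 1, by omega⟩
  rw [iterate_succ_apply', iterate_succ_apply', agree h a b (m+1) H m (by omega)]
  rfl

lemma iter_inj (h : Perm X) (a : X) {i j : ℕ} (hi : i < minimalPeriod h a)
    (hj : j < minimalPeriod h a) (e : h^[i] a = h^[j] a) : i = j :=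
  (iterate_eq_iterate_iff_of_lt_minimalPeriod hi hj).1 e

lemma split_half (h : Perm X) (a b : X) (k : ℕ) (hk : 0 < k) (hkn : k < minimalPeriod h a)
    (hb : b = h^[k] a) (j : ℕ) (hj : j < k) :
    minimalPeriod (⇑(swap a b * h)) (h^[j] a) = k := by
  have H : ∀ j, 0 < j → j < k → h^[j] a ≠ a ∧ h^[j] a ≠ b := by
    intro j hj hjk
    constructor
    · intro e
      have := iter_inj h a (i := j) (j := 0) (by omega) (by omega) e
      omega
    · rw [hb]
      intro e
      have := iter_inj h a (by omega) (by omega) e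
      omega
  have hper : minimalPeriod (⇑(swap a b * h)) a = k := by
    apply minPer_eq_of _ _ _ hk
    · rw [agree_end h a b k hk H, ← hb, swap_apply_right]
    · intro j h0 hj
      rw [agree h a b k H j hj]
      exact (H j h0 hj).1
  rw [← agree h a b k H j hj, minimalPeriod_apply_iterate, hper]
  exact (swap a b * h).injective.mem_periodicPts a

lemma split_all (h : Perm X) (a b : X) (k n : ℕ) (hk : 0 < k) (hn : n = minimalPeriod h a)
    (hkn : k < n)
    (hb : b = h^[k] a) (j : ℕ) (hj : j < n) :
    minimalPeriod (⇑(swap a b * h)) (h^[j] a) = if j < k then k else n - k := by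
  split_ifs with hjk
  · exact split_half h a b k hk (by omega) hb j hjk
  · have hpb : minimalPeriod h b = n := by
      rw [hb, minimalPeriod_apply_iterate, hn]
      exact h.injective.mem_periodicPts a
    have ha : a = h^[n-k] b := by
      rw [hb, ← iterate_add_apply, show n - k + k = n by omega, hn]
      exact iterate_minimalPeriod.symm
    have := split_half h b a (n-k) (by omega) (by omega) ha (j-k) (by omega)
    rw [hb, ← iterate_add_apply, show j - k + k = j by omega, ← hb, swap_comm] at this
    exact this

lemma split_out (h : Perm X) (a b : X) (n : ℕ) (hn : n = minimalPeriod h a)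
    (k : ℕ) (hkn : k < n) (hb : b = h^[k] a)
    (x : X) (hx : ∀ j, j < n → h^[j] a ≠ x) :
    minimalPeriod (⇑(swap a b * h)) x = minimalPeriod h x := by
  have hit : h^[n] a = a := by rw [hn]; exact iterate_minimalPeriod
  have key : ∀ m, (⇑(swap a b * h))^[m] x = h^[m] x ∧ ∀ j, j < n → h^[j] a ≠ h^[m] x := by
    intro m
    induction m with
    | zero => exact ⟨rfl, hx⟩
    | succ m ih =>
      have h2 : ∀ j, j < n → h^[j] a ≠ h^[m+1] x := by
        intro j hj e
        rw [iterate_succ_apply'] at e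
        rcases Nat.eq_zero_or_pos j with rfl | h0
        · apply ih.2 (n-1) (by omega)
          apply h.injective
          rw [← e, ← iterate_succ_apply' h, show (n-1).succ = n by omega, hit]
          rfl
        · apply ih.2 (j-1) (by omega)
          apply h.injective
          rw [← e, ← iterate_succ_apply' h, show (j-1).succ = j by omega]
      refine ⟨?_, h2⟩
      rw [iterate_succ_apply', ih.1, iterate_succ_apply']
      rw [iterate_succ_apply'] at h2
      refine swap_apply_of_ne_of_ne (h2 0 (by omega)).symm ?_
      rw [hb]
      exact (h2 k hkn).symm
  apply Nat.dvd_antisymm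
  · rw [← isPeriodicPt_iff_minimalPeriod_dvd]
    exact (key _).1.trans iterate_minimalPeriod
  · rw [← isPeriodicPt_iff_minimalPeriod_dvd]
    exact (key _).1.symm.trans iterate_minimalPeriod

lemma split_card (h : Perm X) (a b : X) (k n : ℕ) (hk : 0 < k) (hn : n = minimalPeriod h a)
    (hkn : k < n) (hb : b = h^[k] a) (r : ℕ) :
    #{x | minimalPeriod (⇑(swap a b * h)) x = r} + (if n = r then n else 0) =
    #{x | minimalPeriod h x = r} + (if k = r then k else 0) + (if n - k = r then n - k else 0) := by
  set C : Finset X := (range n).image (fun j => h^[j] a) with hC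
  have hinj : Set.InjOn (fun j => h^[j] a) (range n : Set ℕ) := by
    intro i hi j hj e
    simp only [coe_range, Set.mem_Iio] at hi hj
    exact iter_inj h a (by omega) (by omega) e
  rw [card_filter, card_filter, ← sum_add_sum_compl C, ← sum_add_sum_compl C
    (fun x => if minimalPeriod h x = r then 1 else 0)]
  have h1 : ∑ x ∈ Cᶜ, (if minimalPeriod (⇑(swap a b * h)) x = r then 1 else 0)
      = ∑ x ∈ Cᶜ, (if minimalPeriod h x = r then 1 else 0) := by
    apply sum_congr rfl
    intro x hx
    rw [split_out h a b n hn k hkn hb x]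
    intro j hj e
    apply mem_compl.1 hx
    rw [hC]
    exact mem_image.2 ⟨j, by simpa using hj, e⟩
  have h2 : ∑ x ∈ C, (if minimalPeriod h x = r then 1 else 0) = if n = r then n else 0 := by
    rw [hC, sum_image hinj]
    rw [sum_congr rfl (g := fun _ => if n = r then 1 else 0)]
    · simp
    · intro j hj
      rw [minimalPeriod_apply_iterate (h.injective.mem_periodicPts a), hn]
  have h3 : ∑ x ∈ C, (if minimalPeriod (⇑(swap a b * h)) x = r then 1 else 0) =
      (if k = r then k else 0) + (if n - k = r then n - k else 0) := by
    rw [hC, sum_image hinj, ← sum_range_add_sum_Ico _ hkn.le]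
    congr 1
    · rw [sum_congr rfl (g := fun _ => if k = r then 1 else 0)]
      · simp
      · intro j hj
        simp only [mem_range] at hj
        rw [split_all h a b k n hk hn hkn hb j (by omega), if_pos hj]
    · rw [sum_congr rfl (g := fun _ => if n - k = r then 1 else 0)]
      · simp
      · intro j hj
        simp only [mem_Ico] at hj
        rw [split_all h a b k n hk hn hkn hb j (by omega), if_neg (show ¬ j < k by omega)]
  rw [h1, h2, h3]
  ring

lemma zero_notMem (h : Perm X) : 0 ∉ cycleTypeFull h := by
  intro hm
  rcases Multiset.mem_add.1 hm with hm | hm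
  · exact absurd (Equiv.Perm.two_le_of_mem_cycleType hm) (by omega)
  · exact absurd (Multiset.eq_of_mem_replicate hm) (by omega)

lemma split_type (h : Perm X) (a b : X) (k n : ℕ) (hk : 0 < k) (hn : n = minimalPeriod h a)
    (hkn : k < n) (hb : b = h^[k] a) :
    cycleTypeFull (swap a b * h) + {n} = cycleTypeFull h + {k, n - k} := by
  ext r
  rcases Nat.eq_zero_or_pos r with rfl | hr
  · rw [Multiset.count_eq_zero_of_notMem, Multiset.count_eq_zero_of_notMem]
    · simp [zero_notMem]; omega
    · simp [zero_notMem]; omega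
  · have := split_card h a b k n hk hn hkn hb r
    rw [card_eq_mul_count _ _ hr, card_eq_mul_count _ _ hr] at this
    simp only [Multiset.count_add, Multiset.count_singleton, Multiset.insert_eq_cons,
      Multiset.count_cons]
    apply Nat.eq_of_mul_eq_mul_left hr
    have e : ∀ m, (if m = r then m else 0) = r * (if r = m then 1 else 0) := by
      intro m
      by_cases hm : m = r
      · rw [if_pos hm, if_pos hm.symm, mul_one, hm]
      · rw [if_neg hm, if_neg (Ne.symm hm), mul_zero]
    rw [e, e, e] at this
    linarith

lemma exists_iter (h : Perm X) (a b : X) (hab : a ≠ b) (hs : h.SameCycle a b) :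
    ∃ k, 0 < k ∧ k < minimalPeriod h a ∧ b = h^[k] a := by
  obtain ⟨m, _, _, hm⟩ := hs.exists_pow_eq
  rw [← Equiv.Perm.iterate_eq_pow, ← iterate_mod_minimalPeriod_eq] at hm
  refine ⟨_, ?_, Nat.mod_lt _ (minPer_pos h a), hm.symm⟩
  rcases Nat.eq_zero_or_pos (m % minimalPeriod h a) with h0 | h0
  · rw [h0] at hm
    exact absurd hm hab
  · exact h0

lemma merge_card (h : Perm X) (a b : X) (hab : a ≠ b) (hs : ¬ h.SameCycle a b) :
    Multiset.card (cycleTypeFull h) = Multiset.card (cycleTypeFull (swap a b * h)) + 1 := by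
  have hs' : (swap a b * h).SameCycle a b := by
    refine ⟨(minimalPeriod h a : ℕ), ?_⟩
    rw [zpow_natCast, ← Equiv.Perm.iterate_eq_pow, agree_end h a b _ (minPer_pos h a),
      iterate_minimalPeriod, swap_apply_left]
    intro j h0 hj
    constructor
    · intro e
      have := iter_inj h a (i := j) (j := 0) hj (by omega) e
      omega
    · intro e
      apply hs
      exact ⟨j, by rw [zpow_natCast, ← Equiv.Perm.iterate_eq_pow, e]⟩
  obtain ⟨k, hk, hkn, hb⟩ := exists_iter _ a b hab hs'
  have := congrArg Multiset.card (split_type _ a b k _ hk rfl hkn hb)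
  rw [← mul_assoc, swap_mul_self, one_mul] at this
  simp at this
  omega

lemma sum_full (h : Perm X) : (cycleTypeFull h).sum = Fintype.card X := by
  unfold cycleTypeFull
  rw [Multiset.sum_add, Equiv.Perm.sum_cycleType, Multiset.sum_replicate, smul_eq_mul, mul_one,
    ← Finset.card_univ, add_comm, ← Finset.card_filter_add_card_filter_not (s := univ) (fun x => h x = x)]
  rfl

lemma cond_iff (h : Perm X) (i : ℕ) (hi : 0 < i) (a b : X) (hab : a ≠ b) :
    cycleTypeFull (swap a b * h) = (cycleTypeFull h).erase (2 * i) + {i, i} ↔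
      minimalPeriod h a = 2 * i ∧ b = h^[i] a := by
  constructor
  · intro e
    have hm : 2 * i ∈ cycleTypeFull h := by
      by_contra hm
      rw [Multiset.erase_of_notMem hm] at e
      have := congrArg Multiset.sum e
      rw [Multiset.sum_add, sum_full, sum_full] at this
      simp at this
      omega
    have e2 : cycleTypeFull (swap a b * h) + {2 * i} = cycleTypeFull h + {i, i} := by
      conv_rhs => rw [← Multiset.cons_erase hm]
      rw [e, ← Multiset.singleton_add]
      abel
    have hs : h.SameCycle a b := by
      by_contra hs
      have h1 := merge_card h a b hab hs
      have h2 := congrArg Multiset.card e2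
      simp at h2
      omega
    obtain ⟨k, hk, hkn, hb⟩ := exists_iter _ a b hab hs
    have h3 := split_type _ a b k _ hk rfl hkn hb
    set n := minimalPeriod h a with hn
    have h4 : ({2 * i} : Multiset ℕ) + {k, n - k} = {n} + {i, i} := by
      apply add_left_cancel (a := cycleTypeFull h + cycleTypeFull (swap a b * h))
      calc _ = (cycleTypeFull (swap a b * h) + {2 * i}) + (cycleTypeFull h + {k, n - k}) := by abel
        _ = (cycleTypeFull h + {i, i}) + (cycleTypeFull (Equiv.swap a b * h) + {n}) := by rw [e2, h3]
        _ = _ := by abel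
    have h5 : n = 2 * i := by
      have : 2 * i ∈ ({n} : Multiset ℕ) + {i, i} := by rw [← h4]; simp
      simp at this
      omega
    have h6 : k = i := by
      rw [h5] at h4
      have h7 := add_left_cancel h4
      have : k ∈ ({i, i} : Multiset ℕ) := by rw [← h7]; simp
      simpa using this
    exact ⟨h5, by rw [← h6]; exact hb⟩
  · rintro ⟨hn, hb⟩
    have h3 := split_type _ a b i _ hi rfl (by omega) hb
    rw [hn, show 2 * i - i = i by omega] at h3
    have hm : 2 * i ∈ cycleTypeFull h := by
      have : 2 * i ∈ cycleTypeFull h + {i, i} := by rw [← h3]; simp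
      simp at this
      rcases this with h | h
      · omega
      · exact h.resolve_right (by omega)
    rw [← Multiset.cons_erase hm, ← Multiset.singleton_add] at h3
    apply add_right_cancel (b := ({2 * i} : Multiset ℕ))
    rw [h3]
    abel

lemma swap_eq_imp {a b c d : X} (hab : a ≠ b) (e : swap a b = swap c d) :
    (c = a ∧ d = b) ∨ (c = b ∧ d = a) := by
  have h1 : swap c d a = b := by rw [← e, swap_apply_left]
  rw [swap_apply_def] at h1
  split_ifs at h1 with h2 h3
  · exact Or.inl ⟨h2.symm, h1⟩
  · exact Or.inr ⟨h1, h3.symm⟩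
  · exact absurd h1 hab

end CutCount

open CutCount Function in
/-- for a permutation `h` with cycle type `μ` (including fixed points) and a
positive integer `i`, the number of transpositions `τ` such that the cycle type of `τ ∘ h`
is `μ` with one part `2i` removed and two parts `i` added is exactly `i · m_{2i}(μ)`. -/
theorem count_cut_transpositions_eq
    {X : Type*} [Fintype X] [DecidableEq X] (h : Equiv.Perm X) (i : ℕ) (hi : 0 < i) :
    Set.ncard {τ : Equiv.Perm X | τ.IsSwap ∧
        cycleTypeFull (τ * h)
          = (cycleTypeFull h).erase (2 * i) + {i, i}}
      = i * (cycleTypeFull h).count (2 * i) := by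
  classical
  set S : Finset X := univ.filter fun x => minimalPeriod h x = 2 * i with hS
  have hne : ∀ a, minimalPeriod h a = 2 * i → a ≠ h^[i] a := by
    intro a ha e
    have := iter_inj h a (i := 0) (j := i) (by omega) (by omega) e
    omega
  have hback : ∀ a, minimalPeriod h a = 2 * i → h^[i] (h^[i] a) = a := by
    intro a ha
    rw [← iterate_add_apply, ← two_mul, ← ha]
    exact iterate_minimalPeriod
  have hset : {τ : Equiv.Perm X | τ.IsSwap ∧
        cycleTypeFull (τ * h) = (cycleTypeFull h).erase (2 * i) + {i, i}}
      = ↑(S.image fun a => swap a (h^[i] a)) := by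
    ext τ
    simp only [Set.mem_ofPred_eq, coe_image, Set.mem_image, hS, coe_filter, mem_univ, true_and]
    constructor
    · rintro ⟨⟨a, b, hab, rfl⟩, e⟩
      obtain ⟨h1, h2⟩ := (cond_iff h i hi a b hab).1 e
      exact ⟨a, h1, by rw [← h2]⟩
    · rintro ⟨a, ha, rfl⟩
      exact ⟨⟨a, _, hne a ha, rfl⟩, (cond_iff h i hi a _ (hne a ha)).2 ⟨ha, rfl⟩⟩
  rw [hset, Set.ncard_coe_finset]
  have h1 := card_eq_mul_count h (2 * i) (by omega)
  have h2 := Finset.card_eq_sum_card_image (fun a => swap a (h^[i] a)) S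
  rw [Finset.sum_const_nat (m := 2)] at h2
  · rw [← hS] at h1
    apply Nat.eq_of_mul_eq_mul_left (n := 2) (by omega)
    rw [mul_comm, ← h2, h1, mul_assoc]
  · intro τ hτ
    obtain ⟨a, ha, rfl⟩ := mem_image.1 hτ
    have ha' : minimalPeriod h a = 2 * i := by simpa [hS] using ha
    rw [← card_pair (hne a ha')]
    congr 1
    ext c
    simp only [mem_filter, mem_insert, mem_singleton]
    constructor
    · rintro ⟨_, e⟩
      rcases swap_eq_imp (hne a ha') e.symm with h | h
      · exact Or.inl h.1
      · exact Or.inr h.1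
    · rintro (rfl | rfl)
      · exact ⟨ha, rfl⟩
      · refine ⟨?_, ?_⟩
        · simp only [hS, mem_filter, mem_univ, true_and]
          rw [minimalPeriod_apply_iterate (h.injective.mem_periodicPts a), ha']
        · rw [hback a ha', swap_comm]
end

section
/- Let l ≥ 1 be an integer and let b_0, b_1, …, b_l be rational numbers. Then the following are equivalent: (i) for every integer i with 0 ≤ i ≤ l−1, ∑_{k=i}^{l} (k!/(k−i)!)·b_k = 0; (ii) for every k with 0 ≤ k ≤ l, b_k = (−1)^k·binom(l,k)·b_0. In particular, the space of solutions of the linear system (i) is one-dimensional, spanned by the vector (binom(l,k)·(−1)^k)_{k=0}^{l}. -/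
open Finset

theorem aux_alt (i m : ℕ) (hm : m ≠ 0) :
    ∑ k ∈ Finset.Icc i (i + m), (Nat.descFactorial k i : ℚ) *
      ((-1) ^ k * (Nat.choose (i + m) k : ℚ)) = 0 := by
  have h0 : ∑ j ∈ Finset.range (m + 1), ((-1 : ℚ) ^ j * (Nat.choose m j : ℚ)) = 0 := by
    have := Int.alternating_sum_range_choose_of_ne hm
    exact_mod_cast this
  have hI : Finset.Icc i (i + m) = Finset.Ico i (i + m + 1) := by
    ext x; simp only [Finset.mem_Icc, Finset.mem_Ico]; omega
  rw [hI, Finset.sum_Ico_eq_sum_range]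
  have e : i + m + 1 - i = m + 1 := by omega
  rw [e]
  have : ∀ j ∈ Finset.range (m + 1), (Nat.descFactorial (i + j) i : ℚ) *
      ((-1) ^ (i + j) * (Nat.choose (i + m) (i + j) : ℚ)) =
      ((i.factorial : ℚ) * (Nat.choose (i + m) i : ℚ) * (-1) ^ i) *
        ((-1 : ℚ) ^ j * (Nat.choose m j : ℚ)) := by
    intro j hj
    have hj' : j ≤ m := by have := Finset.mem_range.mp hj; omega
    have h1 := Nat.choose_mul (n := i + m) (k := i + j) (s := i) (by omega)
    rw [Nat.add_sub_cancel_left, Nat.add_sub_cancel_left] at h1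
    have h2 : ((i + m).choose (i + j) : ℚ) * ((i + j).choose i : ℚ)
        = ((i + m).choose i : ℚ) * (m.choose j : ℚ) := by exact_mod_cast h1
    rw [Nat.descFactorial_eq_factorial_mul_choose, pow_add]
    push_cast
    linear_combination ((i.factorial : ℚ) * (-1) ^ i * (-1) ^ j) * h2
  rw [Finset.sum_congr rfl this, ← Finset.mul_sum, h0, mul_zero]

theorem aux_uniq (l : ℕ) (c : ℕ → ℚ) (hc : c l = 0)
    (h : ∀ i : ℕ, i < l → ∑ k ∈ Finset.Icc i l, (Nat.descFactorial k i : ℚ) * c k = 0) :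
    ∀ d k : ℕ, k + d = l → c k = 0 := by
  intro d
  induction d using Nat.strong_induction_on with
  | _ d ih =>
    intro k hk
    rcases Nat.eq_zero_or_pos d with rfl | hd
    · have : k = l := by omega
      rw [this]; exact hc
    · have h1 := h k (by omega)
      rw [Finset.sum_eq_single k] at h1
      · rw [Nat.descFactorial_self] at h1
        have : (k.factorial : ℚ) ≠ 0 := by exact_mod_cast k.factorial_ne_zero
        exact (mul_eq_zero.mp h1).resolve_left this
      · intro j hj hne
        have := Finset.mem_Icc.mp hj
        rw [ih (l - j) (by omega) j (by omega), mul_zero]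
      · intro hn
        exact absurd (Finset.mem_Icc.mpr ⟨le_refl k, by omega⟩) hn

/-- for `l ≥ 1` and rationals `b_0, …, b_l`, the linear system
`∑_{k=i}^{l} (k!/(k−i)!)·b_k = 0` for `0 ≤ i ≤ l−1` holds if and only if
`b_k = (−1)^k · binom(l,k) · b_0` for all `0 ≤ k ≤ l`; in particular the solution space
is one-dimensional, spanned by `((−1)^k binom(l,k))_k`. -/
theorem kernel_of_falling_factorial_system
    (l : ℕ) (hl : 1 ≤ l) (b : ℕ → ℚ) :
    (∀ i : ℕ, i < l →
        ∑ k ∈ Finset.Icc i l, (Nat.descFactorial k i : ℚ) * b k = 0)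
    ↔ (∀ k : ℕ, k ≤ l → b k = (-1) ^ k * (Nat.choose l k : ℚ) * b 0) := by
  constructor
  · intro h
    have key := aux_uniq l (fun k => b k - (-1) ^ k * (Nat.choose l k : ℚ) * ((-1) ^ l * b l))
      (by
        have : ((-1 : ℚ) ^ l) * (-1) ^ l = 1 := by rw [← mul_pow]; simp
        simp only [Nat.choose_self, Nat.cast_one]
        linear_combination (-b l) * this)
      (by
        intro i hi
        obtain ⟨m, rfl⟩ := Nat.exists_eq_add_of_lt hi
        have h1 := h i hi
        have h2 := aux_alt i (m + 1) (by omega)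
        rw [← add_assoc] at h2
        calc _ = ∑ k ∈ Finset.Icc i (i + m + 1), (Nat.descFactorial k i : ℚ) * b k
              - (∑ k ∈ Finset.Icc i (i + m + 1), (Nat.descFactorial k i : ℚ) *
                ((-1) ^ k * (Nat.choose (i + m + 1) k : ℚ))) *
                  ((-1) ^ (i + m + 1) * b (i + m + 1)) := by
              rw [Finset.sum_mul, ← Finset.sum_sub_distrib]
              exact Finset.sum_congr rfl fun k _ => by ring
          _ = 0 := by rw [h1, h2]; ring)
    intro k hk
    have h0 := key l 0 (by omega)
    have hk' := key (l - k) k (by omega)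
    simp only [Nat.choose_zero_right, Nat.cast_one, pow_zero] at h0 hk'
    linear_combination hk' - (-1) ^ k * (Nat.choose l k : ℚ) * h0
  · intro h i hi
    obtain ⟨m, rfl⟩ := Nat.exists_eq_add_of_lt hi
    have h2 := aux_alt i (m + 1) (by omega)
    rw [← add_assoc] at h2
    calc _ = (∑ k ∈ Finset.Icc i (i + m + 1), (Nat.descFactorial k i : ℚ) *
                ((-1) ^ k * (Nat.choose (i + m + 1) k : ℚ))) * b 0 := by
          rw [Finset.sum_mul]
          refine Finset.sum_congr rfl fun k hk => ?_
          rw [h k (Finset.mem_Icc.mp hk).2]; ring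
      _ = 0 := by rw [h2, zero_mul]
end

section
/- Let r ≥ 1 be an integer and let J_0, J_1, …, J_r be polynomials with rational coefficients in a variable τ such that deg J_k ≤ r − k for each 0 ≤ k ≤ r. Suppose that for every integer i with 0 ≤ i ≤ r−1, the polynomial ∑_{k=0}^{r} (r−k)^i · τ^k · J_k(τ) has degree at most i. Then for every 0 ≤ k ≤ r, J_k = ((−1)^k / k!) · (d^k J_0 / dτ^k), the k-th formal derivative of J_0 divided by k! with sign (−1)^k. In particular J_1 = −dJ_0/dτ. -/
open Finset Polynomial

lemma binom_aux (m : ℕ) (r : ℚ) (b : ℕ → ℚ)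
    (h : ∀ i < m, ∑ k ∈ Finset.range (m + 1), (r - k) ^ i * b k = 0) :
    ∀ k ≤ m, b k = (-1) ^ k * (m.choose k : ℚ) * b 0 := by
  have hp : ∀ p : Polynomial ℚ, p.natDegree < m →
      ∑ k ∈ Finset.range (m + 1), p.eval (r - k) * b k = 0 := by
    intro p hpm
    simp_rw [Polynomial.eval_eq_sum_range' hpm, Finset.sum_mul]
    rw [Finset.sum_comm]
    refine Finset.sum_eq_zero fun i hi => ?_
    have := h i (Finset.mem_range.mp hi)
    simp_rw [mul_assoc]
    rw [← Finset.mul_sum, this, mul_zero]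
  have hc : ∀ p : Polynomial ℚ, p.natDegree < m →
      ∑ k ∈ Finset.range (m + 1), p.eval (r - k) * ((-1) ^ k * (m.choose k : ℚ)) = 0 := by
    intro p hpm
    have h1 : (p.comp (C r - X)).natDegree < m := by
      refine lt_of_le_of_lt Polynomial.natDegree_comp_le ?_
      have : (C r - X : Polynomial ℚ).natDegree ≤ 1 := by compute_degree
      nlinarith
    have h2 := congrFun (Polynomial.fwdDiff_iter_eq_zero_of_degree_lt h1) 0
    rw [fwdDiff_iter_eq_sum_shift] at h2
    have h3 : ∑ k ∈ Finset.range (m + 1), p.eval (r - k) * ((-1) ^ k * (m.choose k : ℚ))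
      = (-1) ^ m * ∑ k ∈ Finset.range (m + 1), ((-1 : ℤ) ^ (m - k) * m.choose k) •
        (p.comp (C r - X)).eval (0 + k • (1 : ℚ)) := by
      rw [Finset.mul_sum]
      refine Finset.sum_congr rfl fun k hk => ?_
      have hk' : k ≤ m := by simpa [Nat.lt_succ_iff] using hk
      obtain ⟨d, rfl⟩ := Nat.exists_eq_add_of_le hk'
      have hd : ((-1 : ℚ) ^ d) * (-1) ^ d = 1 := by
        rw [← mul_pow]; simp
      simp only [Nat.add_sub_cancel_left, zsmul_eq_mul, eval_comp, eval_sub, eval_C, eval_X,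
        nsmul_eq_mul, mul_one, zero_add]
      push_cast
      rw [pow_add]
      linear_combination (-(eval (r - k) p * (-1) ^ k * ((k + d).choose k : ℚ))) * hd
    rw [h3, h2]; simp
  intro k hk
  rcases Nat.eq_zero_or_pos k with rfl | hk0
  · simp
  let p : Polynomial ℚ := ∏ j ∈ (Finset.Icc 1 m).erase k, (X - C (r - j))
  have hkm : k ∈ Finset.Icc 1 m := Finset.mem_Icc.mpr ⟨hk0, hk⟩
  have hpd : p.natDegree < m := by
    have : p.natDegree = ((Finset.Icc 1 m).erase k).card := by
      exact Polynomial.natDegree_finsetProd_X_sub_C_eq_card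
        ((Finset.Icc 1 m).erase k) (fun j : ℕ => (r - j : ℚ))
    rw [this, Finset.card_erase_of_mem hkm]
    simp; omega
  have hs : ∑ j ∈ Finset.range (m + 1),
      p.eval (r - j) * (b j - (-1) ^ j * (m.choose j : ℚ) * b 0) = 0 := by
    have e1 := hp p hpd
    have e2 := hc p hpd
    have : ∀ j ∈ Finset.range (m + 1),
      p.eval (r - j) * (b j - (-1) ^ j * (m.choose j : ℚ) * b 0) =
      p.eval (r - j) * b j - p.eval (r - j) * ((-1) ^ j * (m.choose j : ℚ)) * b 0 := by
      intro j _; ring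
    rw [Finset.sum_congr rfl this, Finset.sum_sub_distrib, ← Finset.sum_mul, e1, e2]
    simp
  rw [Finset.sum_eq_single k] at hs
  · rcases mul_eq_zero.mp hs with h0 | h0
    · exfalso
      rw [Polynomial.eval_prod, Finset.prod_eq_zero_iff] at h0
      obtain ⟨j, hj, hj0⟩ := h0
      simp only [eval_sub, eval_X, eval_C] at hj0
      have : (j : ℚ) = k := by linarith
      exact (Finset.mem_erase.mp hj).1 (by exact_mod_cast this)
    · linarith
  · intro j hj hjk
    rcases Nat.eq_zero_or_pos j with rfl | hj0
    · simp
    · have : p.eval (r - j) = 0 := by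
        rw [Polynomial.eval_prod]
        refine Finset.prod_eq_zero (i := j) ?_ (by simp)
        simp at hj ⊢
        omega
      rw [this, zero_mul]
  · intro hk'
    simp at hk'; omega

/-- let `r ≥ 1` and let `J_0, …, J_r ∈ ℚ[τ]` with `deg J_k ≤ r − k`.
If for every `0 ≤ i ≤ r−1` the polynomial `∑_{k=0}^{r} (r−k)^i · τ^k · J_k(τ)` has degree
at most `i`, then `J_k = ((−1)^k / k!) · (d^k J_0 / dτ^k)` for all `0 ≤ k ≤ r`;
in particular `J_1 = −dJ_0/dτ`. -/
theorem polynomial_system_derivative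
    (r : ℕ) (hr : 1 ≤ r) (J : ℕ → Polynomial ℚ)
    (hdeg : ∀ k : ℕ, k ≤ r → (J k).degree ≤ ((r - k : ℕ) : WithBot ℕ))
    (hsys : ∀ i : ℕ, i < r →
      (∑ k ∈ Finset.range (r + 1),
          Polynomial.C (((r - k : ℕ) : ℚ) ^ i) * Polynomial.X ^ k * J k).degree
        ≤ (i : WithBot ℕ)) :
    ∀ k : ℕ, k ≤ r →
      J k = ((-1) ^ k / (Nat.factorial k : ℚ)) • (Polynomial.derivative^[k] (J 0)) := by
  intro k hk
  ext n
  have hR : (((-1) ^ k / (Nat.factorial k : ℚ)) • (Polynomial.derivative^[k] (J 0))).coeff n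
      = (-1) ^ k * ((n + k).choose k : ℚ) * (J 0).coeff (n + k) := by
    rw [coeff_smul, coeff_iterate_derivative, Nat.descFactorial_eq_factorial_mul_choose]
    have : (Nat.factorial k : ℚ) ≠ 0 := by exact_mod_cast Nat.factorial_ne_zero k
    simp only [smul_eq_mul, nsmul_eq_mul]
    push_cast
    field_simp
  rw [hR]
  by_cases hn : n + k ≤ r
  · have key := binom_aux (n + k) r (fun j => (J j).coeff (n + k - j)) ?_ k (by omega)
    · simpa using key
    intro i hi
    have h0 := coeff_eq_zero_of_degree_lt
      (lt_of_le_of_lt (hsys i (by omega)) (Nat.cast_lt.mpr hi))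
    rw [finsetSum_coeff] at h0
    rw [← h0]
    refine Finset.sum_subset_zero_on_sdiff ?_ ?_ ?_
    · intro j hj
      simp at hj ⊢
      omega
    · intro j hj
      simp only [Finset.mem_sdiff, Finset.mem_range] at hj
      rw [mul_assoc, coeff_C_mul, coeff_X_pow_mul', if_neg (by omega), mul_zero]
    · intro j hj
      simp only [Finset.mem_range] at hj
      rw [mul_assoc, coeff_C_mul, coeff_X_pow_mul', if_pos (by omega), Nat.cast_sub (by omega)]
  · rw [coeff_eq_zero_of_degree_lt
      (lt_of_le_of_lt (hdeg k hk) (Nat.cast_lt.mpr (by omega))),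
      coeff_eq_zero_of_degree_lt
      (lt_of_le_of_lt (hdeg 0 (by omega)) (Nat.cast_lt.mpr (by omega))), mul_zero]
end
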